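/- arXiv:1312.3679 — 5 statements merged into one kernel-verified Lean document; each statement's English description precedes it below -/
import Mathlib

section
/- Let σ be an admissible signature function on the triples of [n]. Then the number of 4-tuples a < b < c < d that are convex in σ is at least Z(n). -/
/-- `Zval n` is Hill's conjectured value
`Z(n) = (1/4)⌊n/2⌋⌊(n−1)/2⌋⌊(n−2)/2⌋⌊(n−3)/2⌋` for the crossing number of `K n`.
(The product of the four floors is always divisible by 4, so natural division is exact.) -/
def Zval (n : ℕ) : ℕ :=
  n / 2 * ((n - 1) / 2) * ((n - 2) / 2) * ((n - 3) / 2) / 4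

/-- An x-monotone drawing of the complete graph `K n`: vertices `v i = (x i, 0)` with
`x` strictly increasing, and for each pair `i < j` a continuous function `e i j` on
`[x i, x j]` vanishing at the endpoints, whose graph is the arc of the edge `{i, j}`.
Edges avoid the intermediate vertices, any two distinct edges meet in finitely many
interior parameters, and at each such common point the difference changes sign
(a proper crossing). -/
structure XMonotoneDrawing (n : ℕ) where
  x : Fin n → ℝ
  x_strictMono : StrictMono x
  e : Fin n → Fin n → ℝ → ℝ
  cont : ∀ i j : Fin n, i < j → ContinuousOn (e i j) (Set.Icc (x i) (x j))
  end_left : ∀ i j : Fin n, i < j → e i j (x i) = 0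
  end_right : ∀ i j : Fin n, i < j → e i j (x j) = 0
  avoid_vertex : ∀ i m j : Fin n, i < m → m < j → e i j (x m) ≠ 0
  cross_finite : ∀ i j k l : Fin n, i < j → k < l → (i, j) ≠ (k, l) →
    {t : ℝ | max (x i) (x k) < t ∧ t < min (x j) (x l) ∧ e i j t = e k l t}.Finite
  sign_change : ∀ i j k l : Fin n, i < j → k < l → (i, j) ≠ (k, l) →
    ∀ t : ℝ, max (x i) (x k) < t → t < min (x j) (x l) → e i j t = e k l t →
      ∃ ε > (0 : ℝ), ∀ s : ℝ, max (x i) (x k) < s → t - ε < s → s < t →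
        ∀ u : ℝ, u < min (x j) (x l) → t < u → u < t + ε →
          (e i j s - e k l s) * (e i j u - e k l u) < 0

namespace XMonotoneDrawing

variable {n : ℕ}

/-- The set of parameters at which the edges `{i,j}` and `{k,l}` cross
(both edges are parametrized over the `x`-axis). -/
def crossSet (D : XMonotoneDrawing n) (i j k l : Fin n) : Set ℝ :=
  {t : ℝ | max (D.x i) (D.x k) < t ∧ t < min (D.x j) (D.x l) ∧ D.e i j t = D.e k l t}

/-- The number of crossings between the edges `{i,j}` and `{k,l}`. -/
noncomputable def crossCount (D : XMonotoneDrawing n) (i j k l : Fin n) : ℕ :=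
  (D.crossSet i j k l).ncard

/-- Two edges `{i,j}` and `{k,l}` are adjacent if they share an endpoint index. -/
def Adj (i j k l : Fin n) : Prop := i = k ∨ i = l ∨ j = k ∨ j = l

/-- A drawing is semisimple if no two adjacent edges cross. -/
def Semisimple (D : XMonotoneDrawing n) : Prop :=
  ∀ i j k l : Fin n, i < j → k < l → (i, j) ≠ (k, l) → Adj i j k l →
    D.crossCount i j k l = 0

/-- A drawing is weakly semisimple if every two adjacent edges cross an even
number of times. -/
def WeaklySemisimple (D : XMonotoneDrawing n) : Prop :=
  ∀ i j k l : Fin n, i < j → k < l → (i, j) ≠ (k, l) → Adj i j k l →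
    Even (D.crossCount i j k l)

/-- A drawing is simple if no two adjacent edges cross and every two non-adjacent
edges cross at most once. -/
def Simple (D : XMonotoneDrawing n) : Prop :=
  ∀ i j k l : Fin n, i < j → k < l → (i, j) ≠ (k, l) →
    (Adj i j k l → D.crossCount i j k l = 0) ∧
    (¬ Adj i j k l → D.crossCount i j k l ≤ 1)

/-- `cr D`: the total number of crossings of `D`. (Each unordered pair of distinct
edges is counted twice in the sum, whence the division by 2; `crossCount` is
symmetric in the two edges.) -/
noncomputable def cr (D : XMonotoneDrawing n) : ℕ :=
  (∑ p : (Fin n × Fin n) × (Fin n × Fin n),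
      if p.1.1 < p.1.2 ∧ p.2.1 < p.2.2 ∧ p.1 ≠ p.2 then
        D.crossCount p.1.1 p.1.2 p.2.1 p.2.2
      else 0) / 2

/-- `ocr D`: the number of unordered pairs of edges of `D` crossing an odd number
of times. (Each unordered pair appears twice as an ordered pair.) -/
noncomputable def ocr (D : XMonotoneDrawing n) : ℕ :=
  {p : (Fin n × Fin n) × (Fin n × Fin n) |
    p.1.1 < p.1.2 ∧ p.2.1 < p.2.2 ∧ p.1 ≠ p.2 ∧
      Odd (D.crossCount p.1.1 p.1.2 p.2.1 p.2.2)}.ncard / 2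

/-- The signature of the triple `i < j < k`: `true` (i.e. `+`) if the vertex `v j`
lies below the edge `{i, k}`, i.e. `e i k (x j) > 0`, and `false` (i.e. `−`) otherwise. -/
noncomputable def sig (D : XMonotoneDrawing n) (i j k : Fin n) : Bool :=
  if 0 < D.e i k (D.x j) then true else false

/-- `D` realizes the signature function `σ` if `σ_D` and `σ` agree on all
increasing triples. -/
def Realizes (D : XMonotoneDrawing n) (σ : Fin n → Fin n → Fin n → Bool) : Prop :=
  ∀ i j k : Fin n, i < j → j < k → D.sig i j k = σ i j k

/-- A drawing is pseudolinear if its edges extend to continuous curves over all of `ℝ`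
that avoid all vertices other than their endpoints and such that any two of these
extended curves cross exactly once (the crossing being a sign change of the difference). -/
def Pseudolinear (D : XMonotoneDrawing n) : Prop :=
  ∃ p : Fin n → Fin n → ℝ → ℝ,
    (∀ i j : Fin n, i < j → Continuous (p i j)) ∧
    (∀ i j : Fin n, i < j → ∀ t ∈ Set.Icc (D.x i) (D.x j), p i j t = D.e i j t) ∧
    (∀ i j m : Fin n, i < j → m ≠ i → m ≠ j → p i j (D.x m) ≠ 0) ∧
    (∀ i j k l : Fin n, i < j → k < l → (i, j) ≠ (k, l) →
      ∃ t : ℝ, p i j t = p k l t ∧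
        ∀ s u : ℝ, s < t → t < u →
          (p i j s - p k l s) * (p i j u - p k l u) < 0)

/-- The arc of the edge `{i, j}` as a subset of the plane `ℝ × ℝ`. -/
def edgeArc (D : XMonotoneDrawing n) (i j : Fin n) : Set (ℝ × ℝ) :=
  {q : ℝ × ℝ | D.x i ≤ q.1 ∧ q.1 ≤ D.x j ∧ q.2 = D.e i j q.1}

/-- The union of all edge arcs of the drawing. -/
def arcUnion (D : XMonotoneDrawing n) : Set (ℝ × ℝ) :=
  ⋃ i : Fin n, ⋃ j : Fin n, ⋃ (_ : i < j), D.edgeArc i j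

end XMonotoneDrawing

namespace Sig

variable {n : ℕ}

/-- With respect to a signature function `σ`, the vertex `m ∉ {i, j}` is on the left of
the directed edge `(i, j)` (where `i < j`). -/
def LeftOf (σ : Fin n → Fin n → Fin n → Bool) (i j m : Fin n) : Prop :=
  (i < m ∧ m < j ∧ σ i m j = false) ∨ (m < i ∧ σ m i j = true) ∨ (j < m ∧ σ i j m = true)

/-- The number of vertices on the left of the directed edge `(i, j)`. -/
noncomputable def leftCount (σ : Fin n → Fin n → Fin n → Bool) (i j : Fin n) : ℕ :=
  {m : Fin n | LeftOf σ i j m}.ncard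

/-- The edge `{i, j}` (with `i < j`) is a `k`-edge of `σ` if `min(ℓ, n − 2 − ℓ) = k`,
where `ℓ` is the number of vertices on its left. -/
def IsKEdge (σ : Fin n → Fin n → Fin n → Bool) (k : ℕ) (i j : Fin n) : Prop :=
  min (leftCount σ i j) (n - 2 - leftCount σ i j) = k

/-- `Ek σ k`: the number of `k`-edges of `σ`. -/
noncomputable def Ek (σ : Fin n → Fin n → Fin n → Bool) (k : ℕ) : ℕ :=
  {p : Fin n × Fin n | p.1 < p.2 ∧ IsKEdge σ k p.1 p.2}.ncard

/-- `Ele σ k = E_{≤k}(σ)`: the number of `≤k`-edges of `σ`. -/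
noncomputable def Ele (σ : Fin n → Fin n → Fin n → Bool) (k : ℕ) : ℕ :=
  ∑ i ∈ Finset.range (k + 1), Ek σ i

/-- `Elele σ k = E_{≤≤k}(σ) = Σ_{j=0}^{k} E_{≤j}(σ)`. -/
noncomputable def Elele (σ : Fin n → Fin n → Fin n → Bool) (k : ℕ) : ℕ :=
  ∑ j ∈ Finset.range (k + 1), Ele σ j

/-- `E_{≤≤k}` with an integer index, which vanishes for negative `k`. -/
noncomputable def ElelZ (σ : Fin n → Fin n → Fin n → Bool) (k : ℤ) : ℕ :=
  if 0 ≤ k then Elele σ k.toNat else 0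

/-- The left count of the edge `{i, j}` in the drawing restricted to the first
`n − 1` vertices (the last vertex deleted). -/
noncomputable def leftCountRes (σ : Fin n → Fin n → Fin n → Bool) (i j : Fin n) : ℕ :=
  {m : Fin n | LeftOf σ i j m ∧ (m : ℕ) + 1 < n}.ncard

/-- The edge `{i, j}` is a `k`-edge of the restriction of `σ` to the first `n − 1`
vertices (there `min(ℓ', (n−1) − 2 − ℓ') = k`). -/
def IsKEdgeRes (σ : Fin n → Fin n → Fin n → Bool) (k : ℕ) (i j : Fin n) : Prop :=
  min (leftCountRes σ i j) (n - 3 - leftCountRes σ i j) = k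

/-- The edge `{i, j}` is a `(D,D')`-invariant `≤k`-edge: it avoids the last vertex and
is an `m`-edge with `m ≤ k` both in `σ` and in the restriction of `σ` to the first
`n − 1` vertices. -/
def InvariantLeK (σ : Fin n → Fin n → Fin n → Bool) (k : ℕ) (i j : Fin n) : Prop :=
  (j : ℕ) + 1 < n ∧ (∃ m ≤ k, IsKEdge σ m i j) ∧ (∃ m ≤ k, IsKEdgeRes σ m i j)

/-- The ten 4-tuple forms allowed in signature functions of semisimple x-monotone
drawings: `++++, −−−−, ++−−, −−++, −++−, +−−+, −−−+, +++−, +−−−, −+++`. -/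
def AllowedForm (a b c d : Bool) : Prop :=
  (a, b, c, d) ∈ ([(true, true, true, true), (false, false, false, false),
    (true, true, false, false), (false, false, true, true),
    (false, true, true, false), (true, false, false, true),
    (false, false, false, true), (true, true, true, false),
    (true, false, false, false), (false, true, true, true)] :
      List (Bool × Bool × Bool × Bool))

/-- A signature function is admissible if every increasing 4-tuple is of one of the
ten allowed forms. -/
def Admissible (σ : Fin n → Fin n → Fin n → Bool) : Prop :=
  ∀ a b c d : Fin n, a < b → b < c → c < d →
    AllowedForm (σ a b c) (σ a b d) (σ a c d) (σ b c d)

/-- The six convex forms: `++++, −−−−, ++−−, −−++, −++−, +−−+`. -/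
def ConvexForm (a b c d : Bool) : Prop :=
  (a, b, c, d) ∈ ([(true, true, true, true), (false, false, false, false),
    (true, true, false, false), (false, false, true, true),
    (false, true, true, false), (true, false, false, true)] :
      List (Bool × Bool × Bool × Bool))

/-- The 4-tuple `a < b < c < d` is convex in `σ`. -/
def Convex4 (σ : Fin n → Fin n → Fin n → Bool) (a b c d : Fin n) : Prop :=
  ConvexForm (σ a b c) (σ a b d) (σ a c d) (σ b c d)

/-- The eight 4-tuple forms of pseudolinear x-monotone drawings (the sign-monotone
sequences): `++++, +++−, ++−−, +−−−, −−−−, −−−+, −−++, −+++`. -/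
def PLForm (a b c d : Bool) : Prop :=
  (a, b, c, d) ∈ ([(true, true, true, true), (true, true, true, false),
    (true, true, false, false), (true, false, false, false),
    (false, false, false, false), (false, false, false, true),
    (false, false, true, true), (false, true, true, true)] :
      List (Bool × Bool × Bool × Bool))

/-- The relation `j ⋖ k` on `{j : i < j}`: `j ⋖ k` iff (`j < k` and `σ i j k = +`)
or (`k < j` and `σ i k j = −`). -/
def Below (σ : Fin n → Fin n → Fin n → Bool) (i j k : Fin n) : Prop :=
  (j < k ∧ σ i j k = true) ∨ (k < j ∧ σ i k j = false)

end Sig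

/-! A convex quadruple contains exactly two edges that separate its other two vertices, any other
quadruple exactly three. As an edge with `l` vertices on its left and `r` on its right separates
`l * r` pairs, the number of convex quadruples is `3 * n.choose 4 - ∑ l * r`. Since `l + r = n - 2`,
the products `l * r` are constant up to binomials `(m - l).choose 2` and `(m - r).choose 2`, whose
sum over the edges is `∑ k < m, W k`, where `W k` is the sum of `k - l` and `k - r` over all edges,
with truncated subtraction throughout.

The bound `3 * (k + 2).choose 3 ≤ W k` follows by induction on the number of vertices. When the last
vertex `d` is added and `k` becomes `k + 1`, the edges at `d` contribute `2 * (k + 2).choose 2`: the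
vertices on a fixed side of the edges at an extreme vertex define a transitive tournament, so these
sides have `0, 1, 2, …` elements. The old edges gain one for each side of at most `k` vertices that
does not receive `d`, and there are at least `(k + 2).choose 2` of these: among the edges from a
vertex `i` to larger vertices, the same tournament argument applies to the vertices above `i`, and
the vertices below `i` enlarge a side by at most their number. -/

namespace Sig

open Finset

theorem sum_comp_card_filter_rel {ι M : Type*} [AddCommMonoid M] (S : Finset ι)
    (r : ι → ι → Prop) [DecidableRel r] (irrefl : ∀ x ∈ S, ¬r x x)
    (trans : ∀ x ∈ S, ∀ y ∈ S, ∀ z ∈ S, r x y → r y z → r x z)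
    (total : ∀ x ∈ S, ∀ y ∈ S, x ≠ y → r x y ∨ r y x) (g : ℕ → M) :
    ∑ x ∈ S, g #{y ∈ S | r y x} = ∑ t ∈ range #S, g t := by
  classical
  have rank_lt : ∀ x ∈ S, ∀ y ∈ S, r x y → #{z ∈ S | r z x} < #{z ∈ S | r z y} := by
    intro x hx y hy hxy
    refine card_lt_card <| (ssubset_iff_of_subset fun z hz => ?_).2
      ⟨x, mem_filter.2 ⟨hx, hxy⟩, fun h => irrefl x hx (mem_filter.1 h).2⟩
    obtain ⟨hz, hzx⟩ := mem_filter.1 hz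
    exact mem_filter.2 ⟨hz, trans z hz x hx y hy hzx hxy⟩
  have rank_injOn : Set.InjOn (fun x => #{y ∈ S | r y x}) S := by
    intro x hx y hy hxy
    by_contra hne
    rcases total x hx y hy hne with h | h
    · exact (rank_lt x hx y hy h).ne hxy
    · exact (rank_lt y hy x hx h).ne' hxy
  have image_rank : S.image (fun x => #{y ∈ S | r y x}) = range #S := by
    refine eq_of_subset_of_card_le (image_subset_iff.2 fun x hx => mem_range.2 ?_) ?_
    · exact card_lt_card <| filter_ssubset.2 ⟨x, hx, irrefl x hx⟩
    · rw [card_image_of_injOn rank_injOn, card_range]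
  rw [← image_rank, sum_image rank_injOn]

theorem card_eq_sum_card_powersetCard {ι β : Type*} {m : ℕ} (F : Finset ι → Finset β)
    (supp : β → Finset ι) (card_supp : ∀ S, ∀ q ∈ F S, #(supp q) = m)
    (mem_iff : ∀ S, ∀ q, q ∈ F S ↔ supp q ⊆ S ∧ q ∈ F (supp q)) (S : Finset ι) :
    #(F S) = ∑ Q ∈ S.powersetCard m, #(F Q) := by
  classical
  rw [card_eq_sum_card_fiberwise fun q hq =>
    mem_powersetCard.2 ⟨((mem_iff S q).1 hq).1, card_supp S q hq⟩]
  refine sum_congr rfl fun Q hQ => congrArg card ?_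
  obtain ⟨hQS, hQ⟩ := mem_powersetCard.1 hQ
  ext q
  rw [mem_filter]
  constructor
  · rintro ⟨hq, rfl⟩
    exact ((mem_iff S q).1 hq).2
  · intro hq
    have hqQ := (mem_iff Q q).1 hq
    exact ⟨(mem_iff S q).2 ⟨hqQ.1.trans hQS, hqQ.2⟩,
      eq_of_subset_of_card_le hqQ.1 (by rw [card_supp Q q hq, hQ])⟩

theorem sum_range_tsub_eq_choose {k N : ℕ} (hk : k ≤ N) :
    ∑ t ∈ range N, (k - t) = (k + 1).choose 2 := by
  induction N generalizing k with
  | zero => simp_all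
  | succ N ih =>
    cases k with
    | zero => simp
    | succ k =>
      rw [sum_range_succ', Nat.choose_succ_succ' (k + 1) 1]
      simp only [Nat.add_sub_add_right, ih (Nat.le_of_succ_le_succ hk), Nat.choose_one_right,
        Nat.sub_zero, Nat.reduceAdd]
      omega

theorem sum_range_tsub_left_eq_choose (a m : ℕ) : ∑ k ∈ range m, (k - a) = (m - a).choose 2 := by
  induction m with
  | zero => simp
  | succ m ih =>
    rw [sum_range_succ, ih]
    rcases lt_or_ge m a with h | h
    · simp [Nat.sub_eq_zero_of_le h.le, Nat.sub_eq_zero_of_le (Nat.succ_le_of_lt h)]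
    · rw [Nat.succ_sub h, Nat.choose_succ_succ' _ 1, Nat.choose_one_right, add_comm]

theorem cast_choose_four (n : ℕ) :
    (n.choose 4 : ℚ) = n * (n - 1) * (n - 2) * (n - 3) / 24 := by
  rw [Nat.cast_choose_eq_descPochhammer_div]
  simp only [descPochhammer_succ_eval, descPochhammer_zero, Polynomial.eval_one, Nat.factorial]
  push_cast
  ring

theorem zval_eq_choose_two_mul_choose_two {p q : ℕ} (hpq : p ≤ q) (hqp : q ≤ p + 1) :
    Zval (p + q + 2) = (p + 1).choose 2 * q.choose 2 := by
  rw [Nat.choose_two_right, Nat.choose_two_right, Nat.div_mul_div_comm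
    (Nat.even_mul_pred_self _).two_dvd (Nat.even_mul_pred_self _).two_dvd, Zval,
    show (p + q + 2) / 2 = p + 1 by omega, show (p + q + 2 - 1) / 2 = q by omega,
    show (p + q + 2 - 2) / 2 = p by omega, show (p + q + 2 - 3) / 2 = q - 1 by omega,
    Nat.add_sub_cancel]
  congr 1
  ring

theorem choose_two_mul_choose_two_add {p q : ℕ} (hpq : p ≤ q) (hqp : q ≤ p + 1) :
    (p + 1).choose 2 * q.choose 2 + (p + q + 2).choose 2 * (p * q) =
      3 * (p + q + 2).choose 4 + 3 * (q + 2).choose 4 + 3 * (p + 3).choose 4 := by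
  obtain rfl | rfl : q = p ∨ q = p + 1 := by omega
  all_goals
    qify
    push_cast [cast_choose_four, Nat.cast_choose_two]
    ring

theorem mul_add_choose_two_add_choose_two {l r p q : ℕ} (hpq : p ≤ q) (hqp : q ≤ p + 1)
    (h : l + r = p + q) :
    l * r + ((q - l).choose 2 + (q - r).choose 2) +
      ((p + 1 - l).choose 2 + (p + 1 - r).choose 2) = p * q := by
  wlog hlr : l ≤ r generalizing l r
  · rw [← this (by omega) (Nat.le_of_not_le hlr)]
    ring
  obtain ⟨t, rfl⟩ : ∃ t, p = l + t := ⟨p - l, by omega⟩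
  have larger_side : (q - r).choose 2 = 0 ∧ (l + t + 1 - r).choose 2 = 0 :=
    ⟨Nat.choose_eq_zero_of_lt (by omega), Nat.choose_eq_zero_of_lt (by omega)⟩
  rw [larger_side.1, larger_side.2, add_zero, add_zero, add_assoc l t 1, Nat.add_sub_cancel_left]
  obtain ⟨rfl, rfl⟩ | ⟨rfl, rfl⟩ : q = l + t ∧ r = l + 2 * t ∨
      q = l + (t + 1) ∧ r = l + 2 * t + 1 := by omega
  all_goals
    rw [Nat.add_sub_cancel_left]
    qify
    push_cast [Nat.cast_choose_two]
    ring

section LinearOrder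

variable {α : Type*} [LinearOrder α] {σ : α → α → α → Bool} {S T : Finset α}
  {a b c d i j m x y z : α} {s : Bool} {k : ℕ}

/-- The pairs `i < j` of vertices in `S`, i.e. the edges of the complete graph on `S`. -/
def edges (S : Finset α) : Finset (α × α) := {e ∈ S ×ˢ S | e.1 < e.2}

theorem mem_edges {e : α × α} : e ∈ edges S ↔ e.1 ∈ S ∧ e.2 ∈ S ∧ e.1 < e.2 := by
  simp [edges, and_assoc]

theorem edges_insert_of_forall_lt (hd : ∀ x ∈ T, x < d) :
    edges (insert d T) = edges T ∪ T.image (·, d) := by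
  ext ⟨i, j⟩
  simp only [mem_union, mem_edges, mem_image, mem_insert, Prod.mk.injEq]
  grind

theorem sum_edges_insert {M : Type*} [AddCommMonoid M] (hd : ∀ x ∈ T, x < d) (f : α × α → M) :
    ∑ e ∈ edges (insert d T), f e = ∑ e ∈ edges T, f e + ∑ i ∈ T, f (i, d) := by
  have disj : Disjoint (edges T) (T.image (·, d)) := by
    rw [disjoint_left]
    simp only [mem_edges, mem_image]
    grind
  rw [edges_insert_of_forall_lt hd, sum_union disj,
    sum_image fun _ _ _ _ h => congrArg Prod.fst h]

theorem card_edges (S : Finset α) : #(edges S) = (#S).choose 2 := by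
  induction S using Finset.induction_on_max with
  | empty => rfl
  | insert d T hd ih =>
    rw [card_insert_of_notMem fun h => (hd d h).false, Nat.choose_succ_succ' _ 1, ← ih,
      card_eq_sum_ones, sum_edges_insert hd, ← card_eq_sum_ones, ← card_eq_sum_ones,
      Nat.choose_one_right, add_comm]

/-- Whether the vertex `m` lies on the left of the edge `{i, j}`, where `i < j`; this is the
Boolean form of `LeftOf`, and it is meaningless for `m = i` and `m = j`. -/
def side (σ : α → α → α → Bool) (i j m : α) : Bool :=
  if m < i then σ m i j else if m < j then !σ i m j else σ i j m

/-- The vertices in `S` on the left (`s = true`) or on the right (`s = false`) of the edge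
`{i, j}`, where `i < j`. -/
def sideSet (σ : α → α → α → Bool) (S : Finset α) (i j : α) (s : Bool) : Finset α :=
  {m ∈ S \ {i, j} | side σ i j m = s}

theorem mem_sideSet : m ∈ sideSet σ S i j s ↔ m ∈ S ∧ m ≠ i ∧ m ≠ j ∧ side σ i j m = s := by
  simp [sideSet, and_assoc]

theorem card_sideSet_add_card_sideSet (hi : i ∈ S) (hj : j ∈ S) (hij : i ≠ j) :
    #(sideSet σ S i j true) + #(sideSet σ S i j false) = #S - 2 := by
  rw [← card_pair hij, ← card_sdiff_of_subset (insert_subset hi (singleton_subset_iff.2 hj)),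
    ← card_filter_add_card_filter_not (s := S \ {i, j}) (side σ i j · = true)]
  simp only [sideSet, Bool.not_eq_true]

theorem card_sideSet_insert (hd : d ∉ T) (hi : i ≠ d) (hj : j ≠ d) :
    #(sideSet σ (insert d T) i j s) =
      #(sideSet σ T i j s) + if side σ i j d = s then 1 else 0 := by
  rw [sideSet, insert_sdiff_of_notMem _ (by simp [hi.symm, hj.symm]), filter_insert]
  split_ifs
  · exact card_insert_of_notMem (by simp [hd])
  · rfl

theorem sideSet_insert_right (σ : α → α → α → Bool) (T : Finset α) (i d : α) (s : Bool) :
    sideSet σ (insert d T) i d s = sideSet σ T i d s := by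
  rw [sideSet, insert_sdiff_of_mem _ (by simp), sideSet]

/-- Admissibility of the restriction of a signature function to the vertices in `S`. -/
def AdmissibleOn (σ : α → α → α → Bool) (S : Finset α) : Prop :=
  ∀ a ∈ S, ∀ b ∈ S, ∀ c ∈ S, ∀ d ∈ S, a < b → b < c → c < d →
    AllowedForm (σ a b c) (σ a b d) (σ a c d) (σ b c d)

theorem AdmissibleOn.mono (h : AdmissibleOn σ S) (hTS : T ⊆ S) : AdmissibleOn σ T :=
  fun a ha b hb c hc d hd => h a (hTS ha) b (hTS hb) c (hTS hc) d (hTS hd)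

theorem allowedForm_iff (p q r s : Bool) :
    AllowedForm p q r s ↔ (q = p ∨ q = r) ∧ (r = q ∨ r = s) := by
  unfold AllowedForm
  revert p q r s
  decide

/-! ### Convex quadruples and separations -/

instance (p q r s : Bool) : Decidable (ConvexForm p q r s) :=
  inferInstanceAs (Decidable (_ ∈ _))

/-- The convex quadruples of vertices in `S`, listed increasingly. -/
def convexQuadruples (σ : α → α → α → Bool) (S : Finset α) : Finset (α × α × α × α) :=
  {v ∈ S ×ˢ S ×ˢ S ×ˢ S | v.1 < v.2.1 ∧ v.2.1 < v.2.2.1 ∧ v.2.2.1 < v.2.2.2 ∧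
    ConvexForm (σ v.1 v.2.1 v.2.2.1) (σ v.1 v.2.1 v.2.2.2) (σ v.1 v.2.2.1 v.2.2.2)
      (σ v.2.1 v.2.2.1 v.2.2.2)}

/-- The edges on `S` together with a pair of vertices that they separate, the first one lying on
the left and the second one on the right. -/
def separations (σ : α → α → α → Bool) (S : Finset α) : Finset ((_ : α × α) × (α × α)) :=
  (edges S).sigma fun e => sideSet σ S e.1 e.2 true ×ˢ sideSet σ S e.1 e.2 false

theorem card_separations (σ : α → α → α → Bool) (S : Finset α) : #(separations σ S) =
    ∑ e ∈ edges S, #(sideSet σ S e.1 e.2 true) * #(sideSet σ S e.1 e.2 false) := by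
  simp only [separations, card_sigma, card_product]

theorem card_convexQuadruples_eq_sum (σ : α → α → α → Bool) (S : Finset α) :
    #(convexQuadruples σ S) = ∑ Q ∈ S.powersetCard 4, #(convexQuadruples σ Q) := by
  refine card_eq_sum_card_powersetCard _ (fun v => {v.1, v.2.1, v.2.2.1, v.2.2.2})
    (fun S v hv => ?_) (fun S v => ?_) S
  all_goals
    simp only [convexQuadruples, mem_filter, mem_product] at *
    grind

theorem card_separations_eq_sum (σ : α → α → α → Bool) (S : Finset α) :
    #(separations σ S) = ∑ Q ∈ S.powersetCard 4, #(separations σ Q) := by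
  refine card_eq_sum_card_powersetCard _ (fun v => {v.1.1, v.1.2, v.2.1, v.2.2})
    (fun S v hv => ?_) (fun S v => ?_) S
  all_goals
    simp only [separations, mem_sigma, mem_edges, mem_product, mem_sideSet] at *
    grind

theorem card_sideSet_mul_card_sideSet_of_sdiff_eq (hS : S \ {i, j} = {x, y}) (hxy : x ≠ y) :
    #(sideSet σ S i j true) * #(sideSet σ S i j false) =
      if side σ i j x = side σ i j y then 0 else 1 := by
  rw [sideSet, sideSet, hS]
  cases hx : side σ i j x <;> cases hy : side σ i j y <;>
    simp [filter_insert, filter_singleton, hx, hy, hxy]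

theorem edges_quadruple (hab : a < b) (hbc : b < c) (hcd : c < d) :
    edges {a, b, c, d} = {(a, b), (a, c), (a, d), (b, c), (b, d), (c, d)} := by
  ext ⟨i, j⟩
  simp only [mem_edges, mem_insert, mem_singleton, Prod.mk.injEq]
  grind

theorem card_separations_quadruple (hab : a < b) (hbc : b < c) (hcd : c < d) :
    #(separations σ {a, b, c, d}) =
      (if σ a b c = σ a b d then 0 else 1) + (if (!σ a b c) = σ a c d then 0 else 1) +
      (if (!σ a b d) = !σ a c d then 0 else 1) + (if σ a b c = σ b c d then 0 else 1) +
      (if σ a b d = !σ b c d then 0 else 1) + (if σ a c d = σ b c d then 0 else 1) := by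
  have hac := hab.trans hbc
  have hbd := hbc.trans hcd
  have had := hab.trans hbd
  have separates (i j x y : α) (hS : ({a, b, c, d} : Finset α) \ {i, j} = {x, y}) (hxy : x ≠ y) :=
    card_sideSet_mul_card_sideSet_of_sdiff_eq (σ := σ) hS hxy
  rw [card_separations, edges_quadruple hab hbc hcd]
  repeat rw [sum_insert (by
    simp only [mem_insert, mem_singleton, Prod.mk.injEq]
    grind)]
  rw [sum_singleton, separates a b c d (by grind) hcd.ne, separates a c b d (by grind) hbd.ne,
    separates a d b c (by grind) hbc.ne, separates b c a d (by grind) had.ne,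
    separates b d a c (by grind) hac.ne, separates c d a b (by grind) hab.ne]
  simp only [side, hab, hbc, hcd, hac, hbd, had, if_true, not_lt_of_gt, if_false, add_assoc]

theorem convexQuadruples_quadruple (hab : a < b) (hbc : b < c) (hcd : c < d) :
    convexQuadruples σ {a, b, c, d} =
      if ConvexForm (σ a b c) (σ a b d) (σ a c d) (σ b c d) then {(a, b, c, d)} else ∅ := by
  have increasing (x y z w : α) : (x ∈ ({a, b, c, d} : Finset α) ∧ y ∈ ({a, b, c, d} : Finset α) ∧
    z ∈ ({a, b, c, d} : Finset α) ∧ w ∈ ({a, b, c, d} : Finset α)) ∧ x < y ∧ y < z ∧ z < w ↔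
      x = a ∧ y = b ∧ z = c ∧ w = d := by
    simp only [mem_insert, mem_singleton]
    grind
  ext ⟨x, y, z, w⟩
  have := increasing x y z w
  simp only [convexQuadruples, mem_filter, mem_product]
  split_ifs <;> simp only [mem_singleton, Prod.mk.injEq, notMem_empty] <;> grind

theorem card_convexQuadruples_add_card_separations_quadruple (hab : a < b) (hbc : b < c)
    (hcd : c < d) (h : AllowedForm (σ a b c) (σ a b d) (σ a c d) (σ b c d)) :
    #(convexQuadruples σ {a, b, c, d}) + #(separations σ {a, b, c, d}) = 3 := by
  rw [convexQuadruples_quadruple hab hbc hcd, card_separations_quadruple hab hbc hcd,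
    apply_ite card, card_singleton, card_empty]
  unfold ConvexForm
  unfold AllowedForm at h
  generalize σ a b c = p, σ a b d = q, σ a c d = r, σ b c d = s at h
  revert p q r s
  decide

theorem exists_lt_of_card_eq_four (hS : #S = 4) :
    ∃ a b c d, a < b ∧ b < c ∧ c < d ∧ S = {a, b, c, d} := by
  refine ⟨S.orderEmbOfFin hS 0, S.orderEmbOfFin hS 1, S.orderEmbOfFin hS 2, S.orderEmbOfFin hS 3,
    by simp, by simp, by simp, (image_orderEmbOfFin_univ S hS).symm.trans ?_⟩
  ext x
  rw [mem_image]
  simp [Fin.exists_fin_succ, eq_comm]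

theorem AdmissibleOn.card_convexQuadruples_add_card_separations (h : AdmissibleOn σ S) :
    #(convexQuadruples σ S) + #(separations σ S) = 3 * (#S).choose 4 := by
  rw [card_convexQuadruples_eq_sum, card_separations_eq_sum, ← sum_add_distrib, mul_comm,
    ← card_powersetCard, ← smul_eq_mul, ← sum_const]
  refine sum_congr rfl fun Q hQ => ?_
  obtain ⟨hQS, hQ⟩ := mem_powersetCard.1 hQ
  obtain ⟨a, b, c, d, hab, hbc, hcd, rfl⟩ := exists_lt_of_card_eq_four hQ
  exact card_convexQuadruples_add_card_separations_quadruple hab hbc hcd <|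
    h a (hQS (by simp)) b (hQS (by simp)) c (hQS (by simp)) d (hQS (by simp)) hab hbc hcd

/-! ### Edges at an extreme vertex -/

/-- The tournament on a linear order that orients the pair `y < x` from `y` to `x` if `f y x ≠ s`
and from `x` to `y` if `f y x = s`. For `f = σ i` with `i` below all other vertices it says that
`y` is on the `s`-side of the edge `{i, x}`. -/
def Precedes (f : α → α → Bool) (s : Bool) (y x : α) : Prop :=
  y ≠ x ∧ (if y < x then !f y x else f x y) = s

instance (f : α → α → Bool) (s : Bool) : DecidableRel (Precedes f s) :=
  fun _ _ => inferInstanceAs (Decidable (_ ∧ _))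

theorem Precedes.trans {f : α → α → Bool}
    (middle : ∀ b ∈ T, ∀ c ∈ T, ∀ d ∈ T, b < c → c < d → f b d = f b c ∨ f b d = f c d)
    (hx : x ∈ T) (hy : y ∈ T) (hz : z ∈ T) (hxy : Precedes f s x y) (hyz : Precedes f s y z) :
    Precedes f s x z := by
  unfold Precedes at *
  rcases lt_trichotomy x y with h₁ | h₁ | h₁ <;> rcases lt_trichotomy y z with h₂ | h₂ | h₂ <;>
    rcases lt_trichotomy x z with h₃ | h₃ | h₃ <;> cases s <;> grind

theorem sum_comp_card_filter_precedes {M : Type*} [AddCommMonoid M] {f : α → α → Bool}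
    (middle : ∀ b ∈ T, ∀ c ∈ T, ∀ d ∈ T, b < c → c < d → f b d = f b c ∨ f b d = f c d)
    (s : Bool) (g : ℕ → M) :
    ∑ x ∈ T, g #{y ∈ T | Precedes f s y x} = ∑ t ∈ range #T, g t := by
  refine sum_comp_card_filter_rel T (Precedes f s) (fun x _ h => h.1 rfl)
    (fun x hx y hy z hz => Precedes.trans middle hx hy hz) (fun x _ y _ hxy => ?_) g
  have swap : (if y < x then !f y x else f x y) = !(if x < y then !f x y else f y x) := by grind
  unfold Precedes
  cases s <;> grind

theorem AdmissibleOn.middle_of_forall_gt (h : AdmissibleOn σ (insert i T))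
    (hi : ∀ x ∈ T, i < x) :
    ∀ b ∈ T, ∀ c ∈ T, ∀ d ∈ T, b < c → c < d → σ i b d = σ i b c ∨ σ i b d = σ i c d :=
  fun b hb c hc d hd hbc hcd =>
    ((allowedForm_iff ..).1 <| h i (mem_insert_self i T) b (mem_insert_of_mem hb)
      c (mem_insert_of_mem hc) d (mem_insert_of_mem hd) (hi b hb) hbc hcd).1

theorem AdmissibleOn.middle_of_forall_lt (h : AdmissibleOn σ (insert d T))
    (hd : ∀ x ∈ T, x < d) :
    ∀ a ∈ T, ∀ b ∈ T, ∀ c ∈ T, a < b → b < c → σ a c d = σ a b d ∨ σ a c d = σ b c d :=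
  fun a ha b hb c hc hab hbc =>
    ((allowedForm_iff ..).1 <| h a (mem_insert_of_mem ha) b (mem_insert_of_mem hb)
      c (mem_insert_of_mem hc) d (mem_insert_self d T) hab hbc (hd c hc)).2

theorem sideSet_eq_filter_precedes_of_forall_gt (hi : ∀ x ∈ T, i < x) (x : α) :
    sideSet σ T i x s = {y ∈ T | Precedes (σ i) s y x} := by
  ext y
  rw [mem_sideSet, mem_filter, Precedes, side]
  grind

theorem sideSet_eq_filter_precedes_of_forall_lt (hd : ∀ x ∈ T, x < d) (x : α) :
    sideSet σ T x d s = {y ∈ T | Precedes (fun b c => !σ b c d) s y x} := by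
  ext y
  rw [mem_sideSet, mem_filter, Precedes, side]
  grind

theorem AdmissibleOn.sum_comp_card_sideSet_of_forall_gt {M : Type*} [AddCommMonoid M]
    (h : AdmissibleOn σ (insert i T)) (hi : ∀ x ∈ T, i < x) (s : Bool) (g : ℕ → M) :
    ∑ x ∈ T, g #(sideSet σ T i x s) = ∑ t ∈ range #T, g t := by
  simp only [sideSet_eq_filter_precedes_of_forall_gt hi]
  exact sum_comp_card_filter_precedes (h.middle_of_forall_gt hi) s g

theorem AdmissibleOn.sum_comp_card_sideSet_of_forall_lt {M : Type*} [AddCommMonoid M]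
    (h : AdmissibleOn σ (insert d T)) (hd : ∀ x ∈ T, x < d) (s : Bool) (g : ℕ → M) :
    ∑ x ∈ T, g #(sideSet σ T x d s) = ∑ t ∈ range #T, g t := by
  simp only [sideSet_eq_filter_precedes_of_forall_lt hd]
  refine sum_comp_card_filter_precedes (fun a ha b hb c hc hab hbc => ?_) s g
  simpa only [Bool.not_inj_iff] using h.middle_of_forall_lt hd a ha b hb c hc hab hbc

/-! ### Edges with few vertices on one side -/

/-- The double cumulative number `E_{≤≤k-1}` of the restriction of `σ` to `S`. A `j`-edge with
`j < k` is counted `k - j` times; when `2 * k < #S` only its smaller side has fewer than `k`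
vertices, so both sides may be summed with truncated subtraction. -/
def shallowWeight (σ : α → α → α → Bool) (S : Finset α) (k : ℕ) : ℕ :=
  ∑ e ∈ edges S, ∑ s : Bool, (k - #(sideSet σ S e.1 e.2 s))

/-- The edges on `T` whose `s`-side has at most `k` vertices and does not gain the new vertex `d`;
for `s` ranging over both sides these are the invariant `≤k`-edges. -/
def invariantEdges (σ : α → α → α → Bool) (T : Finset α) (d : α) (k : ℕ) (s : Bool) :
    Finset (α × α) :=
  {e ∈ edges T | side σ e.1 e.2 d ≠ s ∧ #(sideSet σ T e.1 e.2 s) ≤ k}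

theorem shallowWeight_insert (σ : α → α → α → Bool) (hd : ∀ x ∈ T, x < d) (k : ℕ) :
    shallowWeight σ (insert d T) (k + 1) = shallowWeight σ T k +
      ∑ s, #(invariantEdges σ T d k s) + ∑ i ∈ T, ∑ s, (k + 1 - #(sideSet σ T i d s)) := by
  have hdT : d ∉ T := fun h => (hd d h).false
  simp only [shallowWeight, sum_edges_insert hd, sideSet_insert_right, invariantEdges, card_filter]
  rw [sum_comm (s := univ), ← sum_add_distrib]
  congr 1
  refine sum_congr rfl fun e he => ?_
  obtain ⟨h₁, h₂, -⟩ := mem_edges.1 he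
  rw [← sum_add_distrib]
  refine sum_congr rfl fun s _ => ?_
  rw [card_sideSet_insert hdT (hd _ h₁).ne (hd _ h₂).ne]
  split_ifs <;> grind

theorem AdmissibleOn.sum_tsub_card_sideSet (h : AdmissibleOn σ (insert d T))
    (hd : ∀ x ∈ T, x < d) (hk : k ≤ #T) :
    ∑ i ∈ T, ∑ s, (k - #(sideSet σ T i d s)) = 2 * (k + 1).choose 2 := by
  rw [sum_comm]
  simp only [h.sum_comp_card_sideSet_of_forall_lt hd _ (k - ·), sum_range_tsub_eq_choose hk,
    sum_const, card_univ, Fintype.card_bool, smul_eq_mul]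

theorem sum_tsub_card_filter_lt (hk : k ≤ #T) :
    ∑ i ∈ T, (k - #{y ∈ T | y < i}) = (k + 1).choose 2 := by
  rw [sum_comp_card_filter_rel T (· < ·) (fun x _ => lt_irrefl x) (fun _ _ _ _ _ _ => lt_trans)
    (fun _ _ _ _ => lt_or_gt_of_ne) (k - ·), sum_range_tsub_eq_choose hk]

theorem AdmissibleOn.card_sideSet_le_of_side_ne (h : AdmissibleOn σ (insert d T))
    (hd : ∀ x ∈ T, x < d) (hi : i ∈ T) (hj : j ∈ T) (hij : i < j) (hjd : side σ i j d ≠ s) :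
    #(sideSet σ T i j s) ≤
      #{y ∈ T | y < i} + #(sideSet σ {y ∈ T | i < y ∧ side σ i y d ≠ s} i j s) := by
  refine (card_le_card fun y hy => ?_).trans (card_union_le _ _)
  obtain ⟨hyT, hyi, hyj, hys⟩ := mem_sideSet.1 hy
  rw [mem_union, mem_sideSet, mem_filter, mem_filter]
  refine hyi.lt_or_gt.imp (⟨hyT, ·⟩) fun hiy => ⟨⟨hyT, hiy, fun hyd => hjd ?_⟩, hyi, hyj, hys⟩
  have above : ∀ x ∈ insert d {y ∈ T | i < y}, i < x := by
    simp only [mem_insert, mem_filter]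
    grind
  have adm : AdmissibleOn σ (insert i (insert d {y ∈ T | i < y})) :=
    h.mono (by grind)
  -- If `d` were on the `s`-side of `{i, y}`, transitivity would move it to that of `{i, j}`.
  have hdy : d ∈ sideSet σ (insert d {y ∈ T | i < y}) i y s := by
    simp [mem_sideSet, hyd, (hd i hi).ne', (hd y hyT).ne']
  have hyj : y ∈ sideSet σ (insert d {y ∈ T | i < y}) i j s := by
    simp [mem_sideSet, hyi, hyj, hys, hyT, hiy]
  have hdj : d ∈ sideSet σ (insert d {y ∈ T | i < y}) i j s := by
    rw [sideSet_eq_filter_precedes_of_forall_gt above, mem_filter] at hdy hyj ⊢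
    exact ⟨hdy.1, hdy.2.trans (adm.middle_of_forall_gt above) hdy.1 hyj.1 (by simp [hj, hij]) hyj.2⟩
  exact (mem_sideSet.1 hdj).2.2.2

theorem AdmissibleOn.min_le_card_filter (h : AdmissibleOn σ (insert d T)) (hd : ∀ x ∈ T, x < d)
    (hi : i ∈ T) (k : ℕ) (s : Bool) :
    min (k + 1 - #{y ∈ T | y < i}) #{j ∈ T | i < j ∧ side σ i j d ≠ s} ≤
      #{j ∈ T | i < j ∧ side σ i j d ≠ s ∧ #(sideSet σ T i j s) ≤ k} := by
  set r := #{y ∈ T | y < i}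
  set U := {j ∈ T | i < j ∧ side σ i j d ≠ s}
  have adm : AdmissibleOn σ (insert i U) := h.mono (by grind)
  have filter_range : {t ∈ range #U | t < k + 1 - r} = range (min (k + 1 - r) #U) := by
    ext t
    simp [and_comm]
  calc min (k + 1 - r) #U = ∑ t ∈ range #U, if t < k + 1 - r then 1 else 0 := by
        rw [sum_boole, Nat.cast_id, filter_range, card_range]
    _ = #{j ∈ U | #(sideSet σ U i j s) < k + 1 - r} := by
        rw [← adm.sum_comp_card_sideSet_of_forall_gt (fun j hj => (mem_filter.1 hj).2.1)
          s (fun t => if t < k + 1 - r then 1 else 0), sum_boole, Nat.cast_id]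
    _ ≤ _ := card_le_card fun j hj => by
        obtain ⟨hjU, hlt⟩ := mem_filter.1 hj
        obtain ⟨hjT, hij, hjd⟩ := mem_filter.1 hjU
        have : #(sideSet σ T i j s) ≤ r + #(sideSet σ U i j s) :=
          h.card_sideSet_le_of_side_ne hd hi hjT hij hjd
        exact mem_filter.2 ⟨hjT, hij, hjd, by omega⟩

theorem AdmissibleOn.tsub_card_filter_lt_le (h : AdmissibleOn σ (insert d T))
    (hd : ∀ x ∈ T, x < d) (hi : i ∈ T) (hk : k + 2 ≤ #T) :
    k + 1 - #{y ∈ T | y < i} ≤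
      ∑ s, #{j ∈ T | i < j ∧ side σ i j d ≠ s ∧ #(sideSet σ T i j s) ≤ k} := by
  have total : #{y ∈ T | y < i} + (#{j ∈ T | i < j ∧ side σ i j d ≠ true} +
      #{j ∈ T | i < j ∧ side σ i j d ≠ false}) + 1 = #T := by
    have above : {j ∈ T | i < j ∧ side σ i j d ≠ true} ∪ {j ∈ T | i < j ∧ side σ i j d ≠ false} =
        {j ∈ T | i < j} := by grind
    have below : {y ∈ T | y < i} ∪ {j ∈ T | i < j} = T.erase i := by grind
    rw [← card_union_of_disjoint (by grind [disjoint_left]), above,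
      ← card_union_of_disjoint (by grind [disjoint_left]), below, card_erase_add_one hi]
  -- If neither minimum is the truncation, they add up to the number of vertices above `i`.
  have left := h.min_le_card_filter hd hi k true
  have right := h.min_le_card_filter hd hi k false
  rw [Fintype.sum_bool]
  omega

theorem AdmissibleOn.choose_two_le_sum_card_invariantEdges (h : AdmissibleOn σ (insert d T))
    (hd : ∀ x ∈ T, x < d) (hk : k + 2 ≤ #T) :
    (k + 2).choose 2 ≤ ∑ s, #(invariantEdges σ T d k s) := by
  have by_left_end (s : Bool) : #(invariantEdges σ T d k s) =
      ∑ i ∈ T, #{j ∈ T | i < j ∧ side σ i j d ≠ s ∧ #(sideSet σ T i j s) ≤ k} := by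
    simp only [invariantEdges, edges, filter_filter, card_filter, sum_product]
  calc (k + 2).choose 2 = ∑ i ∈ T, (k + 1 - #{y ∈ T | y < i}) :=
        (sum_tsub_card_filter_lt (by omega)).symm
    _ ≤ ∑ i ∈ T, ∑ s, #{j ∈ T | i < j ∧ side σ i j d ≠ s ∧ #(sideSet σ T i j s) ≤ k} :=
        sum_le_sum fun i hi => h.tsub_card_filter_lt_le hd hi hk
    _ = ∑ s, #(invariantEdges σ T d k s) := by
        rw [sum_comm]
        simp only [by_left_end]

theorem AdmissibleOn.three_mul_choose_le_shallowWeight (h : AdmissibleOn σ S)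
    (hk : 2 * k < #S) : 3 * (k + 2).choose 3 ≤ shallowWeight σ S k := by
  induction k generalizing S with
  | zero => simp
  | succ k ih =>
    induction S using Finset.induction_on_max with
    | empty => simp at hk
    | insert d T hd _ =>
      rw [card_insert_of_notMem fun h => (hd d h).false] at hk
      have old := ih (h.mono (subset_insert d T)) (by omega)
      have invariant := h.choose_two_le_sum_card_invariantEdges hd (k := k) (by omega)
      have new := h.sum_tsub_card_sideSet hd (k := k + 1) (by omega)
      rw [shallowWeight_insert σ hd, new, Nat.choose_succ_succ' (k + 2) 2]
      linarith

theorem sum_range_shallowWeight (σ : α → α → α → Bool) (S : Finset α) (m : ℕ) :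
    ∑ k ∈ range m, shallowWeight σ S k =
      ∑ e ∈ edges S, ∑ s, (m - #(sideSet σ S e.1 e.2 s)).choose 2 := by
  simp only [← sum_range_tsub_left_eq_choose, shallowWeight]
  rw [sum_comm]
  exact sum_congr rfl fun _ _ => sum_comm

theorem AdmissibleOn.three_mul_choose_le_sum_shallowWeight {m : ℕ} (h : AdmissibleOn σ S)
    (hm : 2 * m ≤ #S + 1) : 3 * (m + 2).choose 4 ≤ ∑ k ∈ range m, shallowWeight σ S k := by
  induction m with
  | zero => simp [Nat.choose_eq_zero_of_lt]
  | succ m ih =>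
    have last := h.three_mul_choose_le_shallowWeight (k := m) (by omega)
    rw [sum_range_succ, Nat.choose_succ_succ' (m + 2) 3, mul_add, add_comm]
    exact add_le_add (ih (by omega)) last

theorem sum_card_sideSet_mul (σ : α → α → α → Bool) {p q : ℕ} (hpq : p ≤ q) (hqp : q ≤ p + 1)
    (hS : #S = p + q + 2) :
    ∑ e ∈ edges S, #(sideSet σ S e.1 e.2 true) * #(sideSet σ S e.1 e.2 false) +
      ∑ k ∈ range q, shallowWeight σ S k + ∑ k ∈ range (p + 1), shallowWeight σ S k =
    (#S).choose 2 * (p * q) := by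
  simp only [sum_range_shallowWeight, ← sum_add_distrib, Fintype.sum_bool]
  rw [← card_edges, ← smul_eq_mul, ← sum_const]
  refine sum_congr rfl fun e he => mul_add_choose_two_add_choose_two hpq hqp ?_
  obtain ⟨h₁, h₂, h₁₂⟩ := mem_edges.1 he
  rw [card_sideSet_add_card_sideSet h₁ h₂ h₁₂.ne]
  omega

end LinearOrder

end Sig

theorem admissible_convex_count_ge_Z_general {α : Type*} [LinearOrder α] (σ : α → α → α → Bool)
    (S : Finset α) (h : Sig.AdmissibleOn σ S) : Zval S.card ≤ (Sig.convexQuadruples σ S).card := by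
  rcases lt_or_ge S.card 2 with hS | hS
  · simp [Zval, Nat.div_eq_of_lt hS]
  obtain ⟨p, q, hpq, hqp, hn⟩ : ∃ p q, p ≤ q ∧ q ≤ p + 1 ∧ S.card = p + q + 2 :=
    ⟨(S.card - 2) / 2, (S.card - 1) / 2, by omega, by omega, by omega⟩
  have double_count := h.card_convexQuadruples_add_card_separations
  have separations := Sig.sum_card_sideSet_mul σ hpq hqp hn
  have shallow := h.three_mul_choose_le_sum_shallowWeight (m := q) (by omega)
  have shallow' := h.three_mul_choose_le_sum_shallowWeight (m := p + 1) (by omega)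
  have identity := Sig.choose_two_mul_choose_two_add hpq hqp
  rw [Sig.card_separations] at double_count
  rw [hn] at double_count separations ⊢
  rw [Sig.zval_eq_choose_two_mul_choose_two hpq hqp]
  linarith

/-- Let `σ` be an admissible signature function on the triples of
`[n]`. Then the number of increasing 4-tuples convex in `σ` is at least `Z(n)`. -/
theorem admissible_convex_count_ge_Z (n : ℕ)
    (σ : Fin n → Fin n → Fin n → Bool) (hσ : Sig.Admissible σ) :
    Zval n ≤ {q : Fin n × Fin n × Fin n × Fin n |
      q.1 < q.2.1 ∧ q.2.1 < q.2.2.1 ∧ q.2.2.1 < q.2.2.2 ∧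
      Sig.Convex4 σ q.1 q.2.1 q.2.2.1 q.2.2.2}.ncard := by
  simpa [Sig.convexQuadruples, Sig.Convex4, Set.ncard_eq_toFinset_card'] using
    admissible_convex_count_ge_Z_general σ Finset.univ fun a _ b _ c _ d _ => hσ a b c d
end

section
/- Let σ be an admissible signature function on the triples of [n]. Then the number of 4-tuples a < b < c < d that are convex in σ equals 3·C(n, 4) − Σ_{k=0}^{⌊n/2⌋−1} k(n−2−k)·E_k(σ). -/
/-!
An edge with `ℓ` vertices on its left and `r = n - 2 - ℓ` on its right separates `ℓ * r` pairs of
vertices, so `∑ k (n - 2 - k) E_k` counts the pairs (edge, pair of vertices it separates).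
The same pairs can be counted by the quadruple `p₀ < p₁ < p₂ < p₃` of their four vertices. Let
`y r` be the sign of the triple omitting `p r`, negated for odd `r`. The edge `{p i, p j}` separates
the other two vertices `p r`, `p s` precisely when `y r = y s`, so the quadruple contributes the
number of equal pairs among its four signs: `2` if they split evenly, `3` if they split
three to one, `6` if they all agree. The even splits are exactly the six convex forms, and the
signs all agree exactly for the two alternating forms `+-+-` and `-+-+`, which are not admissible.
-/

open Finset

section IncreasingTuples

variable (ι : Type*) [LinearOrder ι] [Fintype ι]

/-- The pairs `i < j`, representing the two-element subsets of `ι`. -/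
def increasingPairs : Finset (ι × ι) := {e | e.1 < e.2}

/-- The quadruples `a < b < c < d`, representing the four-element subsets of `ι`. -/
def increasingQuadruples : Finset (ι × ι × ι × ι) :=
  {q | q.1 < q.2.1 ∧ q.2.1 < q.2.2.1 ∧ q.2.2.1 < q.2.2.2}

variable {ι}

theorem mem_increasingPairs {e : ι × ι} : e ∈ increasingPairs ι ↔ e.1 < e.2 := by
  simp [increasingPairs]

theorem mem_increasingQuadruples {q : ι × ι × ι × ι} :
    q ∈ increasingQuadruples ι ↔ q.1 < q.2.1 ∧ q.2.1 < q.2.2.1 ∧ q.2.2.1 < q.2.2.2 := by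
  simp [increasingQuadruples]

variable (ι) in
/-- Increasing quadruples are the strictly increasing maps from `Fin 4`. -/
def increasingQuadruplesEquiv : increasingQuadruples ι ≃ (Fin 4 ↪o ι) where
  toFun q := OrderEmbedding.ofStrictMono ![q.1.1, q.1.2.1, q.1.2.2.1, q.1.2.2.2] <| by
    obtain ⟨hab, hbc, hcd⟩ := mem_increasingQuadruples.1 q.2
    simp [Fin.strictMono_iff_lt_succ, Fin.forall_fin_succ, hab, hbc, hcd]
  invFun v := ⟨(v 0, v 1, v 2, v 3), by simp [mem_increasingQuadruples]⟩
  left_inv _ := rfl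
  right_inv v := by ext r; fin_cases r <;> rfl

variable (ι) in
theorem card_increasingQuadruples :
    #(increasingQuadruples ι) = (Fintype.card ι).choose 4 := by
  rw [← Nat.card_eq_finsetCard, Nat.card_congr (increasingQuadruplesEquiv ι),
    Nat.card_congr Set.powersetCard.ofFinEmbEquiv, Set.powersetCard.card, Nat.card_eq_fintype_card]

theorem card_mul_card_eq_card_increasingPairs {s t : Finset ι} (hst : Disjoint s t) :
    #s * #t = #{e ∈ increasingPairs ι | e.1 ∈ s ∧ e.2 ∈ t ∨ e.2 ∈ s ∧ e.1 ∈ t} := by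
  rw [disjoint_left] at hst
  rw [← card_product]
  refine card_nbij' (fun e => if e.1 < e.2 then e else e.swap)
    (fun e => if e.1 ∈ s then e else e.swap) ?_ ?_ ?_ ?_ <;>
    simp only [Set.MapsTo, Set.LeftInvOn] <;> grind [mem_increasingPairs]

theorem sum_increasingPairs_sum_increasingPairs {M : Type*} [AddCommMonoid M]
    (g : ι × ι → ι × ι → M)
    (hg : ∀ e ∈ increasingPairs ι, ∀ f,
      f.1 = e.1 ∨ f.1 = e.2 ∨ f.2 = e.1 ∨ f.2 = e.2 → g e f = 0) :
    ∑ e ∈ increasingPairs ι, ∑ f ∈ increasingPairs ι, g e f =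
      ∑ ⟨a, b, c, d⟩ ∈ increasingQuadruples ι,
        (g (a, b) (c, d) + g (a, c) (b, d) + g (a, d) (b, c)
          + g (b, c) (a, d) + g (b, d) (a, c) + g (c, d) (a, b)) := by
  have hsplit : ∀ x ∈ increasingPairs ι ×ˢ increasingPairs ι, g x.1 x.2 =
      (if x.1.2 < x.2.1 then g x.1 x.2 else 0)
        + (if x.1.1 < x.2.1 ∧ x.2.1 < x.1.2 ∧ x.1.2 < x.2.2 then g x.1 x.2 else 0)
        + (if x.1.1 < x.2.1 ∧ x.2.2 < x.1.2 then g x.1 x.2 else 0)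
        + (if x.2.1 < x.1.1 ∧ x.1.2 < x.2.2 then g x.1 x.2 else 0)
        + (if x.2.1 < x.1.1 ∧ x.1.1 < x.2.2 ∧ x.2.2 < x.1.2 then g x.1 x.2 else 0)
        + (if x.2.2 < x.1.1 then g x.1 x.2 else 0) := by
    rintro ⟨e, f⟩ hx
    obtain ⟨he, hf⟩ := mem_product.1 hx
    have := hg e he f
    grind (splits := 20) [mem_increasingPairs]
  rw [← sum_product', sum_congr rfl hsplit]
  simp only [sum_add_distrib, ← sum_filter]
  refine congrArg₂ _ (congrArg₂ _ (congrArg₂ _ (congrArg₂ _ (congrArg₂ _ ?_ ?_) ?_) ?_) ?_) ?_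
  · refine sum_nbij' (fun x => (x.1.1, x.1.2, x.2.1, x.2.2))
      (fun q => ((q.1, q.2.1), (q.2.2.1, q.2.2.2))) ?_ ?_ ?_ ?_ ?_ <;>
    grind [mem_increasingPairs, mem_increasingQuadruples]
  · refine sum_nbij' (fun x => (x.1.1, x.2.1, x.1.2, x.2.2))
      (fun q => ((q.1, q.2.2.1), (q.2.1, q.2.2.2))) ?_ ?_ ?_ ?_ ?_ <;>
    grind [mem_increasingPairs, mem_increasingQuadruples]
  · refine sum_nbij' (fun x => (x.1.1, x.2.1, x.2.2, x.1.2))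
      (fun q => ((q.1, q.2.2.2), (q.2.1, q.2.2.1))) ?_ ?_ ?_ ?_ ?_ <;>
    grind [mem_increasingPairs, mem_increasingQuadruples]
  · refine sum_nbij' (fun x => (x.2.1, x.1.1, x.1.2, x.2.2))
      (fun q => ((q.2.1, q.2.2.1), (q.1, q.2.2.2))) ?_ ?_ ?_ ?_ ?_ <;>
    grind [mem_increasingPairs, mem_increasingQuadruples]
  · refine sum_nbij' (fun x => (x.2.1, x.1.1, x.2.2, x.1.2))
      (fun q => ((q.2.1, q.2.2.2), (q.1, q.2.2.1))) ?_ ?_ ?_ ?_ ?_ <;>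
    grind [mem_increasingPairs, mem_increasingQuadruples]
  · refine sum_nbij' (fun x => (x.2.1, x.2.2, x.1.1, x.1.2))
      (fun q => ((q.2.2.1, q.2.2.2), (q.1, q.2.1))) ?_ ?_ ?_ ?_ ?_ <;>
    grind [mem_increasingPairs, mem_increasingQuadruples]

end IncreasingTuples

namespace Sig

variable {n : ℕ} {σ : Fin n → Fin n → Fin n → Bool} {i j m p : Fin n}

/-- The vertex `m ∉ {i, j}` is on the right of the directed edge `(i, j)` (where `i < j`). -/
def RightOf (σ : Fin n → Fin n → Fin n → Bool) (i j m : Fin n) : Prop :=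
  m ≠ i ∧ m ≠ j ∧ ¬ LeftOf σ i j m

/-- The endpoints of the edge `f` lie on different sides of the edge `e`, neither of them being an
endpoint of `e`. Both edges are given with their smaller endpoint first. -/
def Separates (σ : Fin n → Fin n → Fin n → Bool) (e f : Fin n × Fin n) : Prop :=
  LeftOf σ e.1 e.2 f.1 ∧ RightOf σ e.1 e.2 f.2 ∨ LeftOf σ e.1 e.2 f.2 ∧ RightOf σ e.1 e.2 f.1

/-- The `4`-tuple `a < b < c < d` has one of the forms `+-+-` and `-+-+`. -/
def Alternating4 (σ : Fin n → Fin n → Fin n → Bool) (a b c d : Fin n) : Prop :=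
  σ a b c ≠ σ a b d ∧ σ a b d ≠ σ a c d ∧ σ a c d ≠ σ b c d

theorem Admissible.not_alternating4 (hσ : Admissible σ) {a b c d : Fin n}
    (hab : a < b) (hbc : b < c) (hcd : c < d) : ¬ Alternating4 σ a b c d := by
  have h := hσ a b c d hab hbc hcd
  unfold Alternating4
  generalize σ a b c = w, σ a b d = x, σ a c d = y, σ b c d = z at h ⊢
  unfold AllowedForm at h
  decide +revert

theorem Admissible.setOf_alternating4_eq_empty (hσ : Admissible σ) :
    {q : Fin n × Fin n × Fin n × Fin n |
      q.1 < q.2.1 ∧ q.2.1 < q.2.2.1 ∧ q.2.2.1 < q.2.2.2 ∧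
      Alternating4 σ q.1 q.2.1 q.2.2.1 q.2.2.2} = ∅ :=
  Set.eq_empty_of_forall_notMem fun _ ⟨hab, hbc, hcd, h⟩ => hσ.not_alternating4 hab hbc hcd h

theorem leftOf_iff_of_lt (hij : i < j) (hmi : m < i) : LeftOf σ i j m ↔ σ m i j = true := by
  grind [LeftOf]

theorem leftOf_iff_of_between (him : i < m) (hmj : m < j) : LeftOf σ i j m ↔ σ i m j = false := by
  grind [LeftOf]

theorem leftOf_iff_of_gt (hij : i < j) (hjm : j < m) : LeftOf σ i j m ↔ σ i j m = true := by
  grind [LeftOf]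

theorem not_leftOf_left (hij : i < j) : ¬ LeftOf σ i j i := by
  grind [LeftOf]

theorem not_leftOf_right (hij : i < j) : ¬ LeftOf σ i j j := by
  grind [LeftOf]

theorem not_separates_of_shared {e f : Fin n × Fin n} (he : e.1 < e.2)
    (h : f.1 = e.1 ∨ f.1 = e.2 ∨ f.2 = e.1 ∨ f.2 = e.2) : ¬ Separates σ e f := by
  grind [Separates, RightOf, not_leftOf_left, not_leftOf_right]

theorem separates_iff_not_leftOf_iff (hmi : m ≠ i) (hmj : m ≠ j) (hpi : p ≠ i) (hpj : p ≠ j) :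
    Separates σ (i, j) (m, p) ↔ ¬ (LeftOf σ i j m ↔ LeftOf σ i j p) := by
  grind [Separates, RightOf]

open Classical in
theorem sum_separates_add_convex4 {a b c d : Fin n} (hab : a < b) (hbc : b < c) (hcd : c < d) :
    (if Separates σ (a, b) (c, d) then 1 else 0) + (if Separates σ (a, c) (b, d) then 1 else 0)
      + (if Separates σ (a, d) (b, c) then 1 else 0) + (if Separates σ (b, c) (a, d) then 1 else 0)
      + (if Separates σ (b, d) (a, c) then 1 else 0) + (if Separates σ (c, d) (a, b) then 1 else 0)
      + (if Convex4 σ a b c d then 1 else 0)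
      = 3 + 3 * if Alternating4 σ a b c d then 1 else 0 := by
  have hac := hab.trans hbc
  have hbd := hbc.trans hcd
  have had := hab.trans hbd
  have hab_cd : Separates σ (a, b) (c, d) ↔ σ a b c ≠ σ a b d := by
    rw [separates_iff_not_leftOf_iff hac.ne' hbc.ne' had.ne' hbd.ne', leftOf_iff_of_gt hab hbc,
      leftOf_iff_of_gt hab hbd, ← Bool.eq_iff_iff]
  have hac_bd : Separates σ (a, c) (b, d) ↔ σ a b c = σ a c d := by
    rw [separates_iff_not_leftOf_iff hab.ne' hbc.ne had.ne' hcd.ne',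
      leftOf_iff_of_between hab hbc, leftOf_iff_of_gt hac hcd]
    cases σ a b c <;> cases σ a c d <;> decide
  have had_bc : Separates σ (a, d) (b, c) ↔ σ a b d ≠ σ a c d := by
    simp [separates_iff_not_leftOf_iff hab.ne' hbd.ne hac.ne' hcd.ne,
      leftOf_iff_of_between hab hbd, leftOf_iff_of_between hac hcd]
  have hbc_ad : Separates σ (b, c) (a, d) ↔ σ a b c ≠ σ b c d := by
    rw [separates_iff_not_leftOf_iff hab.ne hac.ne hbd.ne' hcd.ne', leftOf_iff_of_lt hbc hab,
      leftOf_iff_of_gt hbc hcd, ← Bool.eq_iff_iff]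
  have hbd_ac : Separates σ (b, d) (a, c) ↔ σ a b d = σ b c d := by
    simp [separates_iff_not_leftOf_iff hab.ne had.ne hbc.ne' hcd.ne,
      leftOf_iff_of_lt hbd hab, leftOf_iff_of_between hbc hcd]
  have hcd_ab : Separates σ (c, d) (a, b) ↔ σ a c d ≠ σ b c d := by
    rw [separates_iff_not_leftOf_iff hac.ne had.ne hbc.ne hbd.ne, leftOf_iff_of_lt hcd hac,
      leftOf_iff_of_lt hcd hbc, ← Bool.eq_iff_iff]
  simp only [hab_cd, hac_bd, had_bc, hbc_ad, hbd_ac, hcd_ab, Convex4, Alternating4]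
  rcases (σ a b c).eq_false_or_eq_true with hw | hw <;>
    rcases (σ a b d).eq_false_or_eq_true with hx | hx <;>
    rcases (σ a c d).eq_false_or_eq_true with hy | hy <;>
    rcases (σ b c d).eq_false_or_eq_true with hz | hz <;>
    simp [hw, hx, hy, hz, ConvexForm]

open Classical in
theorem leftCount_eq_card : leftCount σ i j = #{m | LeftOf σ i j m} := by
  rw [leftCount, Set.ncard_eq_toFinset_card', Set.toFinset_ofPred]

open Classical in
theorem disjoint_leftOf_rightOf :
    Disjoint ({m | LeftOf σ i j m} : Finset (Fin n)) ({m | RightOf σ i j m} : Finset (Fin n)) :=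
  disjoint_filter.2 fun _ _ hl hr => hr.2.2 hl

open Classical in
theorem leftCount_add_card_rightOf (hij : i < j) :
    leftCount σ i j + #{m | RightOf σ i j m} = n - 2 := by
  rw [leftCount_eq_card, ← card_union_of_disjoint disjoint_leftOf_rightOf]
  have hunion : univ.filter (LeftOf σ i j) ∪ univ.filter (RightOf σ i j) = {i, j}ᶜ := by
    ext m
    simp only [mem_union, mem_filter_univ, mem_compl, mem_insert, mem_singleton]
    grind [RightOf, not_leftOf_left, not_leftOf_right]
  rw [hunion, card_compl, card_pair hij.ne, Fintype.card_fin]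

open Classical in
theorem leftCount_mul_eq_card_separates (hij : i < j) :
    leftCount σ i j * (n - 2 - leftCount σ i j) =
      #{f ∈ increasingPairs (Fin n) | Separates σ (i, j) f} := by
  rw [← leftCount_add_card_rightOf (σ := σ) hij, Nat.add_sub_cancel_left, leftCount_eq_card,
    card_mul_card_eq_card_increasingPairs disjoint_leftOf_rightOf]
  exact congrArg card (filter_congr fun f _ => by simp only [mem_filter_univ, Separates])

theorem Ek_eq_card (k : ℕ) :
    Ek σ k = #{e ∈ increasingPairs (Fin n) |
      min (leftCount σ e.1 e.2) (n - 2 - leftCount σ e.1 e.2) = k} := by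
  rw [Ek, ← Set.ncard_coe_finset]
  simp [increasingPairs, filter_filter, IsKEdge]

theorem sum_Ek_nsmul {M : Type*} [AddCommMonoid M] (φ : ℕ → M) :
    ∑ k ∈ range (n / 2), Ek σ k • φ k = ∑ e ∈ increasingPairs (Fin n),
      φ (min (leftCount σ e.1 e.2) (n - 2 - leftCount σ e.1 e.2)) := by
  have hlt : ∀ e ∈ increasingPairs (Fin n),
      min (leftCount σ e.1 e.2) (n - 2 - leftCount σ e.1 e.2) ∈ range (n / 2) := by
    intro e he
    have := mem_increasingPairs.1 he
    grind
  rw [← sum_fiberwise_of_maps_to' hlt]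
  simp [Ek_eq_card]

open Classical in
theorem sum_mul_Ek_eq_sum_separates :
    ∑ k ∈ range (n / 2), k * (n - 2 - k) * Ek σ k =
      ∑ e ∈ increasingPairs (Fin n), ∑ f ∈ increasingPairs (Fin n),
        if Separates σ e f then 1 else 0 := by
  simp only [mul_comm _ (Ek σ _), ← smul_eq_mul (Ek σ _)]
  rw [sum_Ek_nsmul]
  refine sum_congr rfl fun e he => ?_
  have hij := mem_increasingPairs.1 he
  have hle := leftCount_add_card_rightOf (σ := σ) hij
  rw [← card_filter, ← leftCount_mul_eq_card_separates hij]
  rcases le_total (leftCount σ e.1 e.2) (n - 2 - leftCount σ e.1 e.2) with h | h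
  · rw [min_eq_left h]
  · rw [min_eq_right h, Nat.sub_sub_self (by omega), mul_comm]

open Classical in
theorem ncard_setOf_increasing (P : Fin n → Fin n → Fin n → Fin n → Prop) :
    {q : Fin n × Fin n × Fin n × Fin n |
      q.1 < q.2.1 ∧ q.2.1 < q.2.2.1 ∧ q.2.2.1 < q.2.2.2 ∧ P q.1 q.2.1 q.2.2.1 q.2.2.2}.ncard =
      ∑ ⟨a, b, c, d⟩ ∈ increasingQuadruples (Fin n), if P a b c d then 1 else 0 := by
  rw [Set.ncard_eq_toFinset_card', Set.toFinset_ofPred, ← card_filter, increasingQuadruples,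
    filter_filter]
  simp only [and_assoc]

end Sig

theorem admissible_convex_count_formula_general (n : ℕ) (σ : Fin n → Fin n → Fin n → Bool) :
    ({q : Fin n × Fin n × Fin n × Fin n |
        q.1 < q.2.1 ∧ q.2.1 < q.2.2.1 ∧ q.2.2.1 < q.2.2.2 ∧
        Sig.Convex4 σ q.1 q.2.1 q.2.2.1 q.2.2.2}.ncard : ℤ) =
      3 * (n.choose 4 : ℤ) -
        ∑ k ∈ Finset.range (n / 2), ((k * (n - 2 - k) : ℕ) : ℤ) * (Sig.Ek σ k : ℤ) +
        3 * ({q : Fin n × Fin n × Fin n × Fin n |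
          q.1 < q.2.1 ∧ q.2.1 < q.2.2.1 ∧ q.2.2.1 < q.2.2.2 ∧
          Sig.Alternating4 σ q.1 q.2.1 q.2.2.1 q.2.2.2}.ncard : ℤ) := by
  classical
  rw [sub_add_eq_add_sub, eq_sub_iff_add_eq', Sig.ncard_setOf_increasing,
    Sig.ncard_setOf_increasing]
  norm_cast
  have hchoose : ∑ q ∈ increasingQuadruples (Fin n), 1 = n.choose 4 := by
    simp [card_increasingQuadruples]
  rw [Sig.sum_mul_Ek_eq_sum_separates, sum_increasingPairs_sum_increasingPairs, ← hchoose,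
    ← sum_add_distrib, mul_sum, mul_sum, ← sum_add_distrib]
  · refine sum_congr rfl fun ⟨a, b, c, d⟩ hq => ?_
    obtain ⟨hab, hbc, hcd⟩ := mem_increasingQuadruples.1 hq
    exact Sig.sum_separates_add_convex4 hab hbc hcd
  · intro e he f hf
    exact if_neg (Sig.not_separates_of_shared (mem_increasingPairs.1 he) hf)

/-- Let `σ` be an admissible signature function on the triples of
`[n]`. Then the number of increasing 4-tuples convex in `σ` equals
`3·C(n,4) − Σ_{k=0}^{⌊n/2⌋−1} k(n−2−k)·E_k(σ)`. -/
theorem admissible_convex_count_formula (n : ℕ)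
    (σ : Fin n → Fin n → Fin n → Bool) (hσ : Sig.Admissible σ) :
    ({q : Fin n × Fin n × Fin n × Fin n |
        q.1 < q.2.1 ∧ q.2.1 < q.2.2.1 ∧ q.2.2.1 < q.2.2.2 ∧
        Sig.Convex4 σ q.1 q.2.1 q.2.2.1 q.2.2.2}.ncard : ℤ) =
      3 * (n.choose 4 : ℤ) -
        ∑ k ∈ Finset.range (n / 2), ((k * (n - 2 - k) : ℕ) : ℤ) * (Sig.Ek σ k : ℤ) := by
  have := admissible_convex_count_formula_general n σ
  rwa [hσ.setOf_alternating4_eq_empty, Set.ncard_empty, Nat.cast_zero, mul_zero, add_zero] at this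
end

section
/- Let σ be an admissible signature function on the triples of [n] and fix i ∈ [n]. Define a relation ⋖ on {j : i < j ≤ n} by: j ⋖ k if and only if (j < k and σ(i,j,k) = +) or (k < j and σ(i,k,j) = −). Then ⋖ is a strict total order; in particular, ⋖ is transitive. -/
/-!
With `i` fixed, `⋖` is a tournament on the vertices after `i`, so transitivity fails only through
a cyclic triple `j ⋖ k ⋖ l ⋖ j`. Rotate such a cycle until `j` is its smallest vertex. If `k < l`,
then `σ i j k`, `σ i j l`, `σ i k l` are `+`, `-`, `+`; if `l < k`, then `σ i j l`, `σ i j k`,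
`σ i l k` are `-`, `+`, `-`. Both patterns are excluded by admissibility.
-/

section SignLT

variable {α : Type*} [LinearOrder α] {τ : α → α → Bool} {j k l : α}

/-- The tournament on a linear order obtained from `<` by reversing the pairs of sign `-`, where
`τ j k` is the sign of the pair `j < k` and `true` stands for `+`. The relation `Sig.Below σ i` is
the tournament of the signs `σ i`. -/
def SignLT (τ : α → α → Bool) (j k : α) : Prop :=
  (j < k ∧ τ j k = true) ∨ (k < j ∧ τ k j = false)

theorem signLT_iff_of_lt (h : j < k) : SignLT τ j k ↔ τ j k = true := by
  simp [SignLT, h, h.not_gt]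

theorem signLT_iff_of_gt (h : k < j) : SignLT τ j k ↔ τ k j = false := by
  simp [SignLT, h, h.not_gt]

theorem signLT_irrefl (j : α) : ¬ SignLT τ j j := by
  simp [SignLT]

theorem signLT_iff_not_swap (h : j ≠ k) : SignLT τ j k ↔ ¬ SignLT τ k j := by
  rcases h.lt_or_gt with hlt | hgt
  · rw [signLT_iff_of_lt hlt, signLT_iff_of_gt hlt, Bool.not_eq_false]
  · rw [signLT_iff_of_gt hgt, signLT_iff_of_lt hgt, Bool.not_eq_true]

theorem SignLT.ne (h : SignLT τ j k) : j ≠ k := by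
  rintro rfl
  exact signLT_irrefl j h

theorem SignLT.asymm (h : SignLT τ j k) : ¬ SignLT τ k j :=
  (signLT_iff_not_swap h.ne).mp h

theorem SignLT.not_cycle_of_lt_of_lt
    (hτ : ∀ ⦃a b c⦄, a < b → b < c → τ a b = τ b c → τ a c = τ a b)
    (hjk_lt : j < k) (hjl_lt : j < l) (hjk : SignLT τ j k) (hkl : SignLT τ k l) :
    ¬ SignLT τ l j := by
  intro hlj
  have hτjk : τ j k = true := (signLT_iff_of_lt hjk_lt).mp hjk
  have hτjl : τ j l = false := (signLT_iff_of_gt hjl_lt).mp hlj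
  rcases hkl.ne.lt_or_gt with hlt | hgt
  · have hτkl : τ k l = true := (signLT_iff_of_lt hlt).mp hkl
    have := hτ hjk_lt hlt (hτjk.trans hτkl.symm)
    simp [hτjk, hτjl] at this
  · have hτlk : τ l k = false := (signLT_iff_of_gt hgt).mp hkl
    have := hτ hjl_lt hgt (hτjl.trans hτlk.symm)
    simp [hτjk, hτjl] at this

theorem SignLT.not_cycle
    (hτ : ∀ ⦃a b c⦄, a < b → b < c → τ a b = τ b c → τ a c = τ a b)
    (hjk : SignLT τ j k) (hkl : SignLT τ k l) : ¬ SignLT τ l j := by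
  intro hlj
  rcases hjk.ne.lt_or_gt with hjk_lt | hkj_lt
  · rcases hlj.ne.lt_or_gt with hlj_lt | hjl_lt
    · exact not_cycle_of_lt_of_lt hτ hlj_lt (hlj_lt.trans hjk_lt) hlj hjk hkl
    · exact not_cycle_of_lt_of_lt hτ hjk_lt hjl_lt hjk hkl hlj
  · rcases hkl.ne.lt_or_gt with hkl_lt | hlk_lt
    · exact not_cycle_of_lt_of_lt hτ hkl_lt hkj_lt hkl hlj hjk
    · exact not_cycle_of_lt_of_lt hτ (hlk_lt.trans hkj_lt) hlk_lt hlj hjk hkl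

theorem SignLT.trans
    (hτ : ∀ ⦃a b c⦄, a < b → b < c → τ a b = τ b c → τ a c = τ a b)
    (hjk : SignLT τ j k) (hkl : SignLT τ k l) : SignLT τ j l := by
  have hne : j ≠ l := by
    rintro rfl
    exact hjk.asymm hkl
  exact (signLT_iff_not_swap hne).mpr (not_cycle hτ hjk hkl)

theorem below_relation_strict_total_order_general (τ : α → α → Bool)
    (hτ : ∀ ⦃a b c⦄, a < b → b < c → τ a b = τ b c → τ a c = τ a b) :
    (∀ j : α, ¬ SignLT τ j j) ∧
    (∀ j k : α, j ≠ k → (SignLT τ j k ↔ ¬ SignLT τ k j)) ∧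
    (∀ j k l : α, SignLT τ j k → SignLT τ k l → SignLT τ j l) :=
  ⟨signLT_irrefl, fun _ _ => signLT_iff_not_swap, fun _ _ _ => SignLT.trans hτ⟩

end SignLT

theorem Sig.AllowedForm.snd_eq_fst_of_fst_eq_third {a b c d : Bool} (h : Sig.AllowedForm a b c d)
    (hac : a = c) : b = a := by
  unfold Sig.AllowedForm at h
  decide +revert

/-- Let `σ` be an admissible signature function on the triples of
`[n]` and fix `i`. The relation `j ⋖ k` (for `i < j`, `i < k`) defined by
`(j < k ∧ σ i j k = +) ∨ (k < j ∧ σ i k j = −)` is a strict total order on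
`{j : i < j}`: it is irreflexive, satisfies trichotomy, and is transitive. -/
theorem below_relation_strict_total_order (n : ℕ)
    (σ : Fin n → Fin n → Fin n → Bool) (hσ : Sig.Admissible σ) (i : Fin n) :
    (∀ j : Fin n, i < j → ¬ Sig.Below σ i j j) ∧
    (∀ j k : Fin n, i < j → i < k → j ≠ k → (Sig.Below σ i j k ↔ ¬ Sig.Below σ i k j)) ∧
    (∀ j k l : Fin n, i < j → i < k → i < l →
      Sig.Below σ i j k → Sig.Below σ i k l → Sig.Below σ i j l) := by
  obtain ⟨irrefl, iff_not_swap, trans⟩ :=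
    below_relation_strict_total_order_general (fun j k : Set.Ioi i => σ i j k)
      fun a b c hab hbc => (hσ i a b c a.2 hab hbc).snd_eq_fst_of_fst_eq_third
  exact ⟨fun j hj => irrefl ⟨j, hj⟩,
    fun j k hj hk hjk => iff_not_swap ⟨j, hj⟩ ⟨k, hk⟩ (Subtype.coe_ne_coe.mp hjk),
    fun j k l hj hk hl => trans ⟨j, hj⟩ ⟨k, hk⟩ ⟨l, hl⟩⟩
end

section
/- Let σ and σ' be admissible signature functions on the triples of [n]. For a signature function τ and i < j, let λ_τ(i,j) denote the number of indices m ∉ {i,j} that are on the left of the directed edge (i,j) with respect to τ. If λ_σ(i,j) = λ_{σ'}(i,j) for all 1 ≤ i < j ≤ n, then σ = σ' (the λ-matrix of an admissible signature function determines it uniquely). -/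
/-!
For fixed `i`, being on the left of the edges leaving `i` to the right is a tournament on the
vertices to the right of `i`, and admissibility makes it transitive: forbidding `+-+` and `-+-` at
the start of a quadruple `i < b < c < d` says exactly that the tournament on `{b, c, d}` has no
cycle. A transitive tournament is the only tournament with its scores: by induction along it, the
predecessors of a vertex are still predecessors in any tournament with the same scores, and there
are no others because their number is the same. Now `λ(i, j)` is the score of `j` plus a
contribution of the vertices to the left of `i`, which involves only triples starting before `i`; so
`σ i · ·` is recovered by induction on `i`.
-/

theorem eq_of_ncard_setOf_rel_eq {α : Type*} {r s : α → α → Prop} [IsWellFounded α r]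
    [Std.Trichotomous s] (hfin : ∀ a, {b | s b a}.Finite)
    (hcard : ∀ a, {b | r b a}.ncard = {b | s b a}.ncard) : r = s := by
  suffices h : ∀ a, {b | r b a} = {b | s b a} from
    funext₂ fun b a => propext (Set.ext_iff.1 (h a) b)
  intro a
  induction a using IsWellFounded.induction r with
  | ind a ih =>
    refine Set.eq_of_subset_of_ncard_le (fun b hba => ?_) (hcard a).ge (hfin a)
    have not_s : ¬ s a b := fun hab => asymm_of r hba ((Set.ext_iff.1 (ih b hba) a).2 hab)
    have ne : b ≠ a := fun hab => irrefl_of r a (hab ▸ hba)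
    exact (trichotomous_of s b a).resolve_right fun h => h.elim ne not_s

namespace Sig

variable {n : ℕ} {σ σ' : Fin n → Fin n → Fin n → Bool} {i : Fin n}

/-- The tournament around `i`: `LeftAround σ i m j` says that `m` is on the left of the edge
`(i, j)`, where `m` and `j` both lie to the right of `i`. It is the converse of `Below σ i`, so that
the score of `j` counts the predecessors of `j`. -/
def LeftAround (σ : Fin n → Fin n → Fin n → Bool) (i : Fin n) (m j : Set.Ioi i) : Prop :=
  LeftOf σ i j m

theorem leftAround_iff {m j : Set.Ioi i} :
    LeftAround σ i m j ↔ m < j ∧ σ i m j = false ∨ j < m ∧ σ i j m = true := by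
  have hm : i < m := m.2
  simp [LeftAround, LeftOf, hm, hm.not_gt]

theorem leftAround_of_gt {j k : Set.Ioi i} (hjk : j < k) :
    LeftAround σ i k j ↔ σ i j k = true := by
  simp [leftAround_iff, hjk, hjk.not_gt]

instance : Std.Irrefl (LeftAround σ i) where
  irrefl j := by simp [leftAround_iff]

instance : Std.Trichotomous (LeftAround σ i) where
  trichotomous m j hmj hjm := by
    rw [leftAround_iff] at hmj hjm
    grind

theorem AllowedForm.eq_or_eq {a b c d : Bool} (h : AllowedForm a b c d) : b = a ∨ b = c := by
  unfold AllowedForm at h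
  revert a b c d
  decide

theorem Admissible.isTrans_leftAround (hσ : Admissible σ) (i : Fin n) :
    IsTrans _ (LeftAround σ i) where
  trans j k l hjk hkl := by
    have acyclic (b c d : Set.Ioi i) (hbc : b < c) (hcd : c < d) :
        σ i b d = σ i b c ∨ σ i b d = σ i c d :=
      (hσ i b c d b.2 hbc hcd).eq_or_eq
    rw [leftAround_iff] at hjk hkl ⊢
    grind

theorem leftCount_eq_ncard_add_ncard (σ : Fin n → Fin n → Fin n → Bool) (j : Set.Ioi i) :
    leftCount σ i j =
      {m | m < i ∧ σ m i j = true}.ncard + {m | LeftAround σ i m j}.ncard := by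
  have split : {m | LeftOf σ i j m} =
      {m | m < i ∧ σ m i j = true} ∪ Subtype.val '' {m | LeftAround σ i m j} := by
    have hij : i < j := j.2
    ext m
    simp only [LeftAround, LeftOf, Set.mem_union, Set.mem_image, Set.mem_ofPred_eq, Subtype.exists,
      Set.mem_Ioi]
    grind
  have disjoint : Disjoint {m | m < i ∧ σ m i j = true}
      (Subtype.val '' {m | LeftAround σ i m j}) := by
    rw [Set.disjoint_left]
    rintro _ ⟨hmi, _⟩ ⟨m, _, rfl⟩
    exact lt_asymm hmi m.2
  rw [leftCount, split, Set.ncard_union_eq disjoint,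
    Set.ncard_image_of_injective _ Subtype.val_injective]

theorem leftAround_eq_of_leftCount_eq [IsTrans _ (LeftAround σ i)]
    (hbefore : ∀ m < i, ∀ j, i < j → σ m i j = σ' m i j)
    (hcount : ∀ j, i < j → leftCount σ i j = leftCount σ' i j) :
    LeftAround σ i = LeftAround σ' i := by
  have : IsWellFounded _ (LeftAround σ i) := ⟨Finite.wellFounded_of_trans_of_irrefl _⟩
  refine eq_of_ncard_setOf_rel_eq (fun _ => Set.toFinite _) fun j => ?_
  have left_eq : {m | m < i ∧ σ m i j = true} = {m | m < i ∧ σ' m i j = true} :=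
    Set.ext fun m => and_congr_right fun hm => by rw [hbefore m hm j j.2]
  have count_eq := hcount j j.2
  rw [leftCount_eq_ncard_add_ncard σ j, leftCount_eq_ncard_add_ncard σ' j, left_eq] at count_eq
  exact Nat.add_left_cancel count_eq

end Sig

theorem lambda_matrix_determines_admissible_signature_general {n : ℕ}
    {σ σ' : Fin n → Fin n → Fin n → Bool} (hσ : ∀ i, IsTrans _ (Sig.LeftAround σ i))
    (hlam : ∀ i j : Fin n, i < j → Sig.leftCount σ i j = Sig.leftCount σ' i j)
    (i j k : Fin n) (hij : i < j) (hjk : j < k) : σ i j k = σ' i j k := by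
  induction i using WellFoundedLT.induction generalizing j k with
  | ind i ih =>
    have around_eq : Sig.LeftAround σ i = Sig.LeftAround σ' i :=
      Sig.leftAround_eq_of_leftCount_eq (fun m hm l hil => ih m hm i l hm hil) (hlam i)
    let j' : Set.Ioi i := ⟨j, hij⟩
    let k' : Set.Ioi i := ⟨k, hij.trans hjk⟩
    have hjk' : j' < k' := hjk
    rw [Bool.eq_iff_iff, ← Sig.leftAround_of_gt hjk', around_eq, Sig.leftAround_of_gt hjk']

/-- The λ-matrix of an admissible signature function determines it:
if `σ` and `σ'` are admissible signature functions on the triples of `[n]` and for all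
`i < j` the numbers of indices on the left of the directed edge `(i, j)` with respect to
`σ` and to `σ'` agree, then `σ = σ'` on all increasing triples. -/
theorem lambda_matrix_determines_admissible_signature (n : ℕ)
    (σ σ' : Fin n → Fin n → Fin n → Bool)
    (hσ : Sig.Admissible σ) (hσ' : Sig.Admissible σ')
    (hlam : ∀ i j : Fin n, i < j → Sig.leftCount σ i j = Sig.leftCount σ' i j) :
    ∀ i j k : Fin n, i < j → j < k → σ i j k = σ' i j k := by
  exact lambda_matrix_determines_admissible_signature_general hσ.isTrans_leftAround hlam
end

section
/- Let D be a simple x-monotone drawing of K_n with n ≥ 3, let U ⊆ ℝ² be the union of all edge arcs of D, and let x ∈ ℝ² \ U be a point whose connected component in ℝ² \ U is bounded. Then there exist indices a < b < c such that x lies in a bounded connected component of ℝ² \ T_{abc}, where T_{abc} is the union of the arcs of the three edges {a,b}, {b,c}, {a,c} (i.e., x lies in the interior of the triangle v_a v_b v_c). -/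
/-!
Take an edge `{i, j}` passing above the point `p` and an edge `{k, l}` passing below it; both exist
because a vertical ray from `p` is unbounded and so must leave the face of `p`. Both edges meet the
vertical line through `p`, so `i ≤ l`; and `i = l` would force that line to pass through the
vertex `i`, where the two edges meet. Hence `{i, l}` is an edge that also crosses the line. If it
passes below `p`, then `p` lies between two edges with common left endpoint `i`; if it passes above,
then `p` lies between two edges with common right endpoint `l`. In either case the triangle spanned
by the two edges encloses `p`: its sides are the graphs, over one interval, of two functions that
agree at both ends.
-/

section BoundedFaces

open Bornology

/-- The union of the bounded components of the complement of `T`: the bounded faces when `T` is a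
drawing, the interior when `T` is a simple closed curve. -/
def boundedFaces {X : Type*} [TopologicalSpace X] [Bornology X] (T : Set X) : Set X :=
  {p | p ∉ T ∧ IsBounded (connectedComponentIn Tᶜ p)}

variable {X Y : Type*} [TopologicalSpace X] [Bornology X] [TopologicalSpace Y] [Bornology Y]

theorem mem_boundedFaces_of_frontier_subset {R T : Set X} {p : X} (hR : IsBounded R)
    (hRT : frontier R ⊆ T) (hpR : p ∈ R) (hpT : p ∉ T) : p ∈ boundedFaces T := by
  have hpint : p ∈ interior R := by
    by_contra hint
    exact hpT (hRT ⟨subset_closure hpR, hint⟩)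
  have hclosure : closure (interior R) ∩ connectedComponentIn Tᶜ p ⊆ interior R := by
    rintro q ⟨hqR, hqC⟩
    by_contra hint
    exact connectedComponentIn_subset _ _ hqC
      (hRT ⟨closure_mono interior_subset hqR, hint⟩)
  have hsub : connectedComponentIn Tᶜ p ⊆ interior R :=
    isPreconnected_connectedComponentIn.subset_of_closure_inter_subset isOpen_interior
      ⟨p, mem_connectedComponentIn hpT, hpint⟩ hclosure
  exact ⟨hpT, hR.subset (hsub.trans interior_subset)⟩

theorem inter_nonempty_of_mem_boundedFaces {S T : Set X} {p : X} (hp : p ∈ boundedFaces T)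
    (hpS : p ∈ S) (hS : IsPreconnected S) (hSb : ¬ IsBounded S) : (S ∩ T).Nonempty := by
  by_contra hST
  have hSTc : S ⊆ Tᶜ := fun q hqS hqT ↦ hST ⟨q, hqS, hqT⟩
  exact hSb (hp.2.subset (hS.subset_connectedComponentIn hpS hSTc))

theorem exists_mem_fiber_of_mem_boundedFaces {T : Set (X × Y)} {p : X × Y}
    (hp : p ∈ boundedFaces T) {I : Set Y} (hpI : p.2 ∈ I) (hI : IsPreconnected I)
    (hIb : ¬ IsBounded I) : ∃ y ∈ I, y ≠ p.2 ∧ (p.1, y) ∈ T := by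
  have hline : ¬ IsBounded ({p.1} ×ˢ I) := fun hb ↦
    hIb (hb.snd_of_prod (Set.singleton_nonempty p.1))
  obtain ⟨⟨_, y⟩, ⟨rfl, hyI⟩, hyT⟩ := inter_nonempty_of_mem_boundedFaces hp
    (S := {p.1} ×ˢ I) ⟨rfl, hpI⟩ (isPreconnected_singleton.prod hI) hline
  refine ⟨y, hyI, fun hy ↦ hp.1 ?_, hyT⟩
  rwa [hy] at hyT

theorem exists_gt_of_mem_boundedFaces {T : Set (X × ℝ)} {p : X × ℝ} (hp : p ∈ boundedFaces T) :
    ∃ y, p.2 < y ∧ (p.1, y) ∈ T := by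
  obtain ⟨y, hle, hne, hyT⟩ := exists_mem_fiber_of_mem_boundedFaces hp Set.self_mem_Ici
    isPreconnected_Ici fun hb ↦ not_bddAbove_Ici _ hb.bddAbove
  exact ⟨y, lt_of_le_of_ne hle hne.symm, hyT⟩

theorem exists_lt_of_mem_boundedFaces {T : Set (X × ℝ)} {p : X × ℝ} (hp : p ∈ boundedFaces T) :
    ∃ y, y < p.2 ∧ (p.1, y) ∈ T := by
  obtain ⟨y, hle, hne, hyT⟩ := exists_mem_fiber_of_mem_boundedFaces hp Set.self_mem_Iic
    isPreconnected_Iic fun hb ↦ not_bddBelow_Iic _ hb.bddBelow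
  exact ⟨y, lt_of_le_of_ne hle hne, hyT⟩

end BoundedFaces

section RegionBetween

variable {X : Type*} {f g : X → ℝ} {s : Set X}

theorem isBounded_regionBetween [Bornology X] (hs : Bornology.IsBounded s)
    (hf : BddBelow (f '' s)) (hg : BddAbove (g '' s)) :
    Bornology.IsBounded (regionBetween f g s) := by
  obtain ⟨m, hm⟩ := hf
  obtain ⟨M, hM⟩ := hg
  refine (hs.prod (Metric.isBounded_Icc m M)).subset fun q hq ↦ ⟨hq.1, ?_, ?_⟩
  · exact (hm (Set.mem_image_of_mem f hq.1)).trans hq.2.1.le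
  · exact hq.2.2.le.trans (hM (Set.mem_image_of_mem g hq.1))

variable [TopologicalSpace X]

theorem isOpen_regionBetween (hs : IsOpen s) (hf : ContinuousOn f s) (hg : ContinuousOn g s) :
    IsOpen (regionBetween f g s) := by
  have hgaps : ContinuousOn (fun q : X × ℝ ↦ (q.2 - f q.1, g q.1 - q.2)) (Prod.fst ⁻¹' s) :=
    (continuousOn_snd.sub (hf.comp continuousOn_fst fun _ hq ↦ hq)).prodMk
      ((hg.comp continuousOn_fst fun _ hq ↦ hq).sub continuousOn_snd)
  convert hgaps.isOpen_inter_preimage (hs.preimage continuous_fst)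
    ((isOpen_Ioi (a := (0 : ℝ))).prod (isOpen_Ioi (a := (0 : ℝ)))) using 1
  ext q
  simp [regionBetween]

theorem closure_regionBetween_subset (hs : IsClosed s) (hf : ContinuousOn f s)
    (hg : ContinuousOn g s) :
    closure (regionBetween f g s) ⊆ {q | q.1 ∈ s ∧ q.2 ∈ Set.Icc (f q.1) (g q.1)} := by
  have hstrip : IsClosed (Prod.fst ⁻¹' s : Set (X × ℝ)) := hs.preimage continuous_fst
  have habove : IsClosed {q ∈ (Prod.fst ⁻¹' s : Set (X × ℝ)) | f q.1 ≤ q.2} :=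
    hstrip.isClosed_le (hf.comp continuousOn_fst fun _ hq ↦ hq) continuousOn_snd
  have hbelow : IsClosed {q ∈ (Prod.fst ⁻¹' s : Set (X × ℝ)) | q.2 ≤ g q.1} :=
    hstrip.isClosed_le continuousOn_snd (hg.comp continuousOn_fst fun _ hq ↦ hq)
  refine (closure_minimal (fun q hq ↦ ?_) (habove.inter hbelow)).trans fun q hq ↦ ?_
  · exact ⟨⟨hq.1, hq.2.1.le⟩, hq.1, hq.2.2.le⟩
  · exact ⟨hq.1.1, hq.1.2, hq.2.2⟩

theorem regionBetween_interior (hfg : Set.EqOn f g (frontier s)) :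
    regionBetween f g (interior s) = regionBetween f g s := by
  refine Set.Subset.antisymm (fun q hq ↦ ⟨interior_subset hq.1, hq.2⟩) fun q hq ↦ ⟨?_, hq.2⟩
  by_contra hint
  exact (hq.2.1.trans hq.2.2).ne (hfg ⟨subset_closure hq.1, hint⟩)

theorem frontier_regionBetween_subset (hs : IsClosed s) (hf : ContinuousOn f s)
    (hg : ContinuousOn g s) (hfg : Set.EqOn f g (frontier s)) :
    frontier (regionBetween f g s) ⊆ s.graphOn f ∪ s.graphOn g := by
  have hopen : IsOpen (regionBetween f g s) := regionBetween_interior hfg ▸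
    isOpen_regionBetween isOpen_interior (hf.mono interior_subset) (hg.mono interior_subset)
  rw [hopen.frontier_eq]
  rintro ⟨t, y⟩ ⟨hq, hnot⟩
  obtain ⟨hts, hfy, hyg⟩ : t ∈ s ∧ f t ≤ y ∧ y ≤ g t := closure_regionBetween_subset hs hf hg hq
  rcases hfy.eq_or_lt with rfl | hfy
  · exact Or.inl (Set.mem_image_of_mem _ hts)
  · rcases hyg.eq_or_lt with rfl | hyg
    · exact Or.inr (Set.mem_image_of_mem _ hts)
    · exact absurd ⟨hts, hfy, hyg⟩ hnot

end RegionBetween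

theorem mem_boundedFaces_of_between_graphs {X : Type*} [MetricSpace X] {f g : X → ℝ} {s : Set X}
    (hs : IsCompact s) (hf : ContinuousOn f s) (hg : ContinuousOn g s)
    (hfg : Set.EqOn f g (frontier s)) {T : Set (X × ℝ)} (hfT : s.graphOn f ⊆ T)
    (hgT : s.graphOn g ⊆ T) {p : X × ℝ} (hpT : p ∉ T) (hps : p.1 ∈ s)
    (hp : p.2 ∈ Set.uIoo (f p.1) (g p.1)) : p ∈ boundedFaces T := by
  have hinf : ContinuousOn (f ⊓ g) s := hf.inf hg
  have hsup : ContinuousOn (f ⊔ g) s := hf.sup hg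
  have hends : Set.EqOn (f ⊓ g) (f ⊔ g) (frontier s) := fun t ht ↦ by simp [hfg ht]
  have hbdd : Bornology.IsBounded (regionBetween (f ⊓ g) (f ⊔ g) s) :=
    isBounded_regionBetween hs.isBounded (hs.bddBelow_image hinf) (hs.bddAbove_image hsup)
  refine mem_boundedFaces_of_frontier_subset hbdd ?_ ⟨hps, hp⟩ hpT
  refine (frontier_regionBetween_subset hs.isClosed hinf hsup hends).trans ?_
  have hchoice : ∀ t ∈ s, ∀ y, y = f t ∨ y = g t → (t, y) ∈ T := by
    rintro t ht _ (rfl | rfl)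
    · exact hfT (Set.mem_image_of_mem _ ht)
    · exact hgT (Set.mem_image_of_mem _ ht)
  rintro _ (⟨t, ht, rfl⟩ | ⟨t, ht, rfl⟩)
  · exact hchoice t ht _ (min_choice (f t) (g t))
  · exact hchoice t ht _ (max_choice (f t) (g t))

/-- A drawing of the complete graph on the linearly ordered vertex set `ι` by x-monotone arcs:
vertex `i` is the point `(x i, y i)`, and for `i < j` the edge `{i, j}` is the graph over
`[x i, x j]` of the continuous function `e i j`. Edges may pass through vertices and may meet
one another in any way. -/
structure MonotoneDrawing (ι : Type*) [LinearOrder ι] where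
  x : ι → ℝ
  y : ι → ℝ
  x_strictMono : StrictMono x
  e : ι → ι → ℝ → ℝ
  cont : ∀ i j, i < j → ContinuousOn (e i j) (Set.Icc (x i) (x j))
  end_left : ∀ i j, i < j → e i j (x i) = y i
  end_right : ∀ i j, i < j → e i j (x j) = y j

namespace MonotoneDrawing

variable {ι : Type*} [LinearOrder ι] (D : MonotoneDrawing ι) {a b c : ι} {p : ℝ × ℝ} {t : ℝ}

/-- The arc of the edge `{i, j}`, for `i < j`. -/
def edgeArc (i j : ι) : Set (ℝ × ℝ) :=
  {q | D.x i ≤ q.1 ∧ q.1 ≤ D.x j ∧ q.2 = D.e i j q.1}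

/-- The union of all edge arcs. -/
def arcUnion : Set (ℝ × ℝ) :=
  ⋃ i, ⋃ j, ⋃ (_ : i < j), D.edgeArc i j

/-- The union of the arcs of the three edges on the vertices `a < b < c`. -/
def triangle (a b c : ι) : Set (ℝ × ℝ) :=
  D.edgeArc a b ∪ D.edgeArc b c ∪ D.edgeArc a c

/-- The function on `[x a, x c]` whose graph is the arc of `{a, b}` followed by that of `{b, c}`,
for `a < b < c`. -/
noncomputable def path (a b c : ι) (t : ℝ) : ℝ :=
  if t ≤ D.x b then D.e a b t else D.e b c t

theorem mem_arcUnion : p ∈ D.arcUnion ↔ ∃ i j, i < j ∧ p ∈ D.edgeArc i j := by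
  simp only [arcUnion, Set.mem_iUnion, exists_prop]

theorem triangle_subset_arcUnion (hab : a < b) (hbc : b < c) :
    D.triangle a b c ⊆ D.arcUnion := by
  rintro q ((hq | hq) | hq)
  · exact D.mem_arcUnion.2 ⟨a, b, hab, hq⟩
  · exact D.mem_arcUnion.2 ⟨b, c, hbc, hq⟩
  · exact D.mem_arcUnion.2 ⟨a, c, hab.trans hbc, hq⟩

theorem path_of_le (ht : t ≤ D.x b) : D.path a b c t = D.e a b t :=
  if_pos ht

theorem path_of_ge (hab : a < b) (hbc : b < c) (ht : D.x b ≤ t) :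
    D.path a b c t = D.e b c t := by
  rcases ht.eq_or_lt with rfl | hlt
  · rw [D.path_of_le le_rfl, D.end_right a b hab, D.end_left b c hbc]
  · exact if_neg hlt.not_ge

theorem continuousOn_path (hab : a < b) (hbc : b < c) :
    ContinuousOn (D.path a b c) (Set.Icc (D.x a) (D.x c)) := by
  rw [← Set.Icc_union_Icc_eq_Icc (D.x_strictMono hab).le (D.x_strictMono hbc).le]
  exact ((D.cont a b hab).congr fun t ht ↦ D.path_of_le ht.2).union_of_isClosed
    ((D.cont b c hbc).congr fun t ht ↦ D.path_of_ge hab hbc ht.1) isClosed_Icc isClosed_Icc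

theorem graphOn_edge_subset_triangle :
    (Set.Icc (D.x a) (D.x c)).graphOn (D.e a c) ⊆ D.triangle a b c := by
  rintro _ ⟨t, ht, rfl⟩
  exact Or.inr ⟨ht.1, ht.2, rfl⟩

theorem graphOn_path_subset_triangle (hab : a < b) (hbc : b < c) :
    (Set.Icc (D.x a) (D.x c)).graphOn (D.path a b c) ⊆ D.triangle a b c := by
  rintro _ ⟨t, ht, rfl⟩
  rcases le_total t (D.x b) with htb | htb
  · exact Or.inl (Or.inl ⟨ht.1, htb, D.path_of_le htb⟩)
  · exact Or.inl (Or.inr ⟨htb, ht.2, D.path_of_ge hab hbc htb⟩)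

theorem path_eqOn_ends (hab : a < b) (hbc : b < c) :
    Set.EqOn (D.path a b c) (D.e a c) {D.x a, D.x c} := by
  rintro t (rfl | rfl)
  · rw [D.path_of_le (D.x_strictMono hab).le, D.end_left a b hab,
      D.end_left a c (hab.trans hbc)]
  · rw [D.path_of_ge hab hbc (D.x_strictMono hbc).le, D.end_right b c hbc,
      D.end_right a c (hab.trans hbc)]

theorem mem_boundedFaces_triangle (hab : a < b) (hbc : b < c) (hp : p ∉ D.triangle a b c)
    (hpac : p.1 ∈ Set.Icc (D.x a) (D.x c))
    (hbetween : p.2 ∈ Set.uIoo (D.path a b c p.1) (D.e a c p.1)) :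
    p ∈ boundedFaces (D.triangle a b c) := by
  have hac : a < c := hab.trans hbc
  have hends : Set.EqOn (D.path a b c) (D.e a c) (frontier (Set.Icc (D.x a) (D.x c))) := by
    rw [frontier_Icc (D.x_strictMono hac).le]
    exact D.path_eqOn_ends hab hbc
  exact mem_boundedFaces_of_between_graphs isCompact_Icc (D.continuousOn_path hab hbc)
    (D.cont a c hac) hends (D.graphOn_path_subset_triangle hab hbc)
    D.graphOn_edge_subset_triangle hp hpac hbetween

theorem exists_triangle_of_common_left (hp : p ∉ D.arcUnion) (hab : a < b) (hac : a < c)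
    (hpab : p.1 ∈ Set.Icc (D.x a) (D.x b)) (hpac : p.1 ∈ Set.Icc (D.x a) (D.x c))
    (hbetween : p.2 ∈ Set.uIoo (D.e a b p.1) (D.e a c p.1)) :
    ∃ i j k, i < j ∧ j < k ∧ p ∈ boundedFaces (D.triangle i j k) := by
  wlog hbc : b < c generalizing b c
  · rcases (not_lt.1 hbc).eq_or_lt with rfl | hcb
    · simp at hbetween
    · exact this hac hab hpac hpab (by rwa [Set.uIoo_comm]) hcb
  rw [← D.path_of_le (c := c) hpab.2] at hbetween
  have hpT : p ∉ D.triangle a b c := Set.notMem_subset (D.triangle_subset_arcUnion hab hbc) hp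
  exact ⟨a, b, c, hab, hbc, D.mem_boundedFaces_triangle hab hbc hpT hpac hbetween⟩

theorem exists_triangle_of_common_right (hp : p ∉ D.arcUnion) (hac : a < c) (hbc : b < c)
    (hpac : p.1 ∈ Set.Icc (D.x a) (D.x c)) (hpbc : p.1 ∈ Set.Icc (D.x b) (D.x c))
    (hbetween : p.2 ∈ Set.uIoo (D.e a c p.1) (D.e b c p.1)) :
    ∃ i j k, i < j ∧ j < k ∧ p ∈ boundedFaces (D.triangle i j k) := by
  wlog hab : a < b generalizing a b
  · rcases (not_lt.1 hab).eq_or_lt with rfl | hba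
    · simp at hbetween
    · exact this hbc hac hpbc hpac (by rwa [Set.uIoo_comm]) hba
  rw [Set.uIoo_comm, ← D.path_of_ge hab hbc hpbc.1] at hbetween
  have hpT : p ∉ D.triangle a b c := Set.notMem_subset (D.triangle_subset_arcUnion hab hbc) hp
  exact ⟨a, b, c, hab, hbc, D.mem_boundedFaces_triangle hab hbc hpT hpac hbetween⟩

theorem exists_edge_above (hp : p ∈ boundedFaces D.arcUnion) :
    ∃ i j, i < j ∧ p.1 ∈ Set.Icc (D.x i) (D.x j) ∧ p.2 < D.e i j p.1 := by
  obtain ⟨y, hy, hyU⟩ := exists_gt_of_mem_boundedFaces hp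
  obtain ⟨i, j, hij, hi, hj, hye⟩ := D.mem_arcUnion.1 hyU
  exact ⟨i, j, hij, ⟨hi, hj⟩, hy.trans_eq hye⟩

theorem exists_edge_below (hp : p ∈ boundedFaces D.arcUnion) :
    ∃ i j, i < j ∧ p.1 ∈ Set.Icc (D.x i) (D.x j) ∧ D.e i j p.1 < p.2 := by
  obtain ⟨y, hy, hyU⟩ := exists_lt_of_mem_boundedFaces hp
  obtain ⟨i, j, hij, hi, hj, hye⟩ := D.mem_arcUnion.1 hyU
  exact ⟨i, j, hij, ⟨hi, hj⟩, hye.symm.trans_lt hy⟩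

theorem left_lt_right_of_edge_ne {i j k l : ι} (hij : i < j) (hkl : k < l)
    (hpi : D.x i ≤ t) (hpl : t ≤ D.x l) (hne : D.e i j t ≠ D.e k l t) : i < l := by
  refine lt_of_le_of_ne (D.x_strictMono.le_iff_le.1 (hpi.trans hpl)) ?_
  rintro rfl
  obtain rfl : t = D.x i := le_antisymm hpl hpi
  exact hne ((D.end_left i j hij).trans (D.end_right k i hkl).symm)

end MonotoneDrawing

theorem caratheodory_for_simple_monotone_drawings_general {ι : Type*} [LinearOrder ι]
    (D : MonotoneDrawing ι) {p : ℝ × ℝ} (hp : p ∈ boundedFaces D.arcUnion) :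
    ∃ a b c, a < b ∧ b < c ∧ p ∈ boundedFaces (D.triangle a b c) := by
  obtain ⟨i, j, hij, hpij, habove⟩ := D.exists_edge_above hp
  obtain ⟨k, l, hkl, hpkl, hbelow⟩ := D.exists_edge_below hp
  have hil : i < l := D.left_lt_right_of_edge_ne hij hkl hpij.1 hpkl.2 (hbelow.trans habove).ne'
  have hpil : p.1 ∈ Set.Icc (D.x i) (D.x l) := ⟨hpij.1, hpkl.2⟩
  rcases lt_trichotomy (D.e i l p.1) p.2 with hlt | heq | hgt
  · exact D.exists_triangle_of_common_left hp.1 hij hil hpij hpil (Set.mem_uIoo_of_gt hlt habove)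
  · exact absurd (D.mem_arcUnion.2 ⟨i, l, hil, hpil.1, hpil.2, heq.symm⟩) hp.1
  · exact D.exists_triangle_of_common_right hp.1 hil hkl hpil hpkl (Set.mem_uIoo_of_gt hbelow hgt)

/-- The drawing with its vertices at height `0` and the general position axioms forgotten. -/
def XMonotoneDrawing.toMonotoneDrawing {n : ℕ} (D : XMonotoneDrawing n) :
    MonotoneDrawing (Fin n) where
  x := D.x
  y _ := 0
  x_strictMono := D.x_strictMono
  e := D.e
  cont := D.cont
  end_left := D.end_left
  end_right := D.end_right

/-- (Carathéodory's theorem for simple x-monotone drawings of complete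
graphs.) Let `n ≥ 3`, let `D` be a simple x-monotone drawing of `K n`, let `U` be the
union of all its edge arcs, and let `x` be a point outside `U` whose connected component
in the complement of `U` is bounded. Then there are indices `a < b < c` such that `x`
lies in a bounded connected component of the complement of the triangle
`T = edgeArc a b ∪ edgeArc b c ∪ edgeArc a c`. -/
theorem caratheodory_for_simple_monotone_drawings (n : ℕ) (hn : 3 ≤ n)
    (D : XMonotoneDrawing n) (hD : D.Simple) (x : ℝ × ℝ)
    (hx : x ∉ D.arcUnion)
    (hb : Bornology.IsBounded (connectedComponentIn (D.arcUnion)ᶜ x)) :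
    ∃ a b c : Fin n, a < b ∧ b < c ∧
      x ∉ (D.edgeArc a b ∪ D.edgeArc b c ∪ D.edgeArc a c) ∧
      Bornology.IsBounded
        (connectedComponentIn (D.edgeArc a b ∪ D.edgeArc b c ∪ D.edgeArc a c)ᶜ x) :=
  caratheodory_for_simple_monotone_drawings_general D.toMonotoneDrawing ⟨hx, hb⟩
end
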